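/- There exists an absolute constant C > 0 such that for all n, d ∈ ℕ and every polynomial f ∈ 𝒫_d(ℝⁿ) satisfying ∫_{[0,1]ⁿ} f(x) dx = 0 and ∫_{[0,1]ⁿ} |f(x)| dx = 1, one has |∫_{[0,1]ⁿ} e^{i t f(x)} dx| ≤ C · min{d, n} · |t|^{−1/d} for every t ∈ ℝ \ {0}. -/

import Mathlib

/-!
Let `F = 2 f`, so that `∫ F = 0` and `∫ (max F 0 - 1) = 0` over the cube, the positive part of `f`
having integral `1 / 2`. The constant amplitude is split as `1 = W₁(F) + W₂(F)` with
`W₁(v) = 2 v / (1 + v²)` and `W₂(v) = (1 - v)² / (1 + v²)`. These satisfy `|Wᵢ| ≤ 2 |Hᵢ|` for the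
`1`-Lipschitz functions `H₁(v) = v` and `H₂(v) = max v 0 - 1`, whose compositions with `F` have
integral zero. It suffices to bound `∫ e^{isF} W(F)` for such a pair `(W, H)`, see `Amplitude`.

If the bound fails on the cube, then for a unimodular `u` the function `Re (u e^{isF} W(F)) - 2 B`
has positive integral and `H(F)` has integral zero. Bisection by planes through rational points
(`Bisected.localize`, as in the localization lemma of Lovász and Simonovits) produces a convex body
with the same two properties, arbitrarily close to a line. Along the line `F` is a
polynomial `g` of degree at most `d`, and the body has a marginal density `w` which is log-concave by
Prékopa's theorem (`LogConc.marginal`) and whose support is not much longer, relative to its bulk,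
than the dimension `n` allows (`exists_needle`, `Needle.core`). Keeping a convex body rather than
passing to the limit costs an error, which is made small by continuity.

It remains to bound `∫ e^{isg} W(g) w` when `∫ H(g) w` is tiny (`needle_bound`). If `S` is the
oscillation of `g` on the bulk of `w`, the Remez inequality shows that `g` varies by at most
`(C min(d,n)) ^ d S` on average. Since `H(g)` has almost zero mean, `W(g)` is at most of this order,
and also at most `2`. On each superlevel set of `w`, the oscillatory integral
gains a factor `(|s| S) ^ (-1/d)` with an absolute constant (`interval_bound`), where integration by
parts uses that `arctan (g' / β)` has total variation at most `π d`. The product of the two factors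
is of order `min(d,n) |s| ^ (-1/d)`.
-/

open MeasureTheory

noncomputable section

/-! ### The Remez inequality -/

/-- A compact set of measure larger than `k η` contains `k + 1` points with consecutive gaps at least
`η`: the points are chosen from left to right, each removing an interval of length `η`. -/
lemma exists_separated (k : ℕ) : ∀ (E : Set ℝ), IsCompact E → ∀ η : ℝ, 0 < η →
    k * η < volume.real E →
    ∃ x : ℕ → ℝ, (∀ i ≤ k, x i ∈ E) ∧ ∀ i j, i ≤ j → j ≤ k → x i + (j - i : ℝ) * η ≤ x j := by
  induction k with
  | zero =>
    intro E hE η hη hv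
    have hne : E.Nonempty := by
      by_contra h
      rw [Set.not_nonempty_iff_eq_empty] at h
      simp [h] at hv
    obtain ⟨a, ha⟩ := hne
    refine ⟨fun _ => a, fun _ _ => ha, fun i j hij hj => ?_⟩
    obtain rfl : j = 0 := by omega
    obtain rfl : i = 0 := by omega
    simp
  | succ k ih =>
    intro E hE η hη hv
    have hv0 : 0 < volume.real E := lt_of_le_of_lt (by positivity) hv
    have hne : E.Nonempty := by
      by_contra h
      rw [Set.not_nonempty_iff_eq_empty] at h
      simp [h] at hv0
    have hmem := hE.sInf_mem hne
    set a := sInf E with ha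
    have hlow : ∀ y ∈ E, a ≤ y := fun y hy => csInf_le hE.bddBelow hy
    have hE' : IsCompact (E ∩ Set.Ici (a + η)) := hE.inter_right isClosed_Ici
    have hsub : E ⊆ (E ∩ Set.Ici (a + η)) ∪ Set.Icc a (a + η) := by
      intro y hy
      rcases le_total (a + η) y with h | h
      · exact Or.inl ⟨hy, h⟩
      · exact Or.inr ⟨hlow y hy, h⟩
    have hvol : volume.real E ≤ volume.real (E ∩ Set.Ici (a + η)) + η := by
      calc volume.real E ≤ volume.real ((E ∩ Set.Ici (a + η)) ∪ Set.Icc a (a + η)) :=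
            measureReal_mono hsub (hE'.union isCompact_Icc).measure_lt_top.ne
        _ ≤ _ := measureReal_union_le _ _
        _ = _ := by rw [Real.volume_real_Icc_of_le (by linarith)]; ring
    push_cast at hv
    obtain ⟨x, hx, hsep⟩ := ih _ hE' η hη (by nlinarith)
    refine ⟨fun i => if i = 0 then a else x (i - 1), ?_, ?_⟩
    · intro i hi
      rcases i with _ | i
      · simpa using hmem
      · simpa using (hx i (by omega)).1
    · intro i j hij hj
      rcases j with _ | j
      · obtain rfl : i = 0 := by omega
        simp
      · rcases i with _ | i
        · have h0 := hsep 0 j (by omega) (by omega)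
          have h1 := (hx 0 (by omega)).2
          simp only [Set.mem_Ici] at h1
          push_cast
          simp at h0 ⊢
          nlinarith
        · have h0 := hsep i j (by omega) (by omega)
          simp
          linarith

lemma prod_abs_sub (m i : ℕ) (hi : i ≤ m) :
    ∏ j ∈ (Finset.range (m + 1)).erase i, |(i : ℝ) - j| = (i.factorial * (m - i).factorial : ℕ) := by
  have hset : (Finset.range (m + 1)).erase i
      = Finset.range i ∪ Finset.Ico (i + 1) (m + 1) := by
    ext j; simp; omega
  have hdisj : Disjoint (Finset.range i) (Finset.Ico (i + 1) (m + 1)) := by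
    rw [Finset.disjoint_left]; intro j; simp; omega
  rw [hset, Finset.prod_union hdisj, Finset.prod_Ico_eq_prod_range]
  push_cast
  congr 1
  · rw [← Finset.prod_range_add_one_eq_factorial, ← Finset.prod_range_reflect]
    push_cast
    refine Finset.prod_congr rfl fun j hj => ?_
    have hj' := Finset.mem_range.1 hj
    have : ((i - 1 - j : ℕ) : ℝ) = i - 1 - j := by
      rw [Nat.cast_sub (by omega), Nat.cast_sub (by omega)]; simp
    rw [this, abs_of_nonneg]
    · ring
    · have : (j : ℝ) < i := by exact_mod_cast hj'
      linarith
  · rw [← Finset.prod_range_add_one_eq_factorial]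
    push_cast
    refine Finset.prod_congr rfl fun j hj => ?_
    rw [abs_of_nonpos] <;> [ring; (have : (0:ℝ) ≤ j := by positivity
                                   linarith)]

lemma remez_const (m : ℕ) : (m + 1 : ℝ) ^ (m + 1) * 2 ^ m / m.factorial ≤ 32 ^ m := by
  have h1 : (m + 1 : ℝ) ^ (m + 1) / (m + 1).factorial ≤ Real.exp (m + 1) :=
    Real.pow_div_factorial_le_exp (m + 1 : ℝ) (by positivity) (m + 1)
  have h2 : (m + 1 : ℝ) ≤ 2 ^ m := by exact_mod_cast Nat.lt_two_pow_self (n := m)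
  rcases Nat.eq_zero_or_pos m with rfl | hm
  · norm_num
  have h3 : Real.exp (m + 1) ≤ 8 ^ m := by
    calc Real.exp (m + 1) ≤ Real.exp (2 * m) := by
          apply Real.exp_le_exp.2
          have : (1 : ℝ) ≤ m := by exact_mod_cast hm
          linarith
      _ = (Real.exp 1 ^ 2) ^ m := by rw [← pow_mul, ← Real.exp_nat_mul]; push_cast; ring_nf
      _ ≤ 8 ^ m := by
          gcongr
          have := Real.exp_one_lt_d9
          have := Real.exp_pos 1
          nlinarith
  rw [Nat.factorial_succ] at h1
  push_cast at h1
  have hf : (0 : ℝ) < m.factorial := by positivity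
  calc (m + 1 : ℝ) ^ (m + 1) * 2 ^ m / m.factorial
      = (m + 1) * ((m + 1 : ℝ) ^ (m + 1) / ((m + 1) * m.factorial)) * 2 ^ m := by field_simp
    _ ≤ 2 ^ m * 8 ^ m * 2 ^ m := by gcongr; exact h1.trans h3
    _ = 32 ^ m := by rw [← mul_pow, ← mul_pow]; norm_num

/-- The Remez inequality, with the constant `32` in place of the sharp `4`: a polynomial bounded by `β` on
a subset `E` of `[A, B]` is controlled on all of `[A, B]`. It is interpolated at `m + 1` points of `E`
that are `|E| / (m + 1)`-separated. -/
theorem remez {m : ℕ} {q : Polynomial ℝ} (hq : q.natDegree ≤ m) {A B : ℝ} {E : Set ℝ}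
    (hE : IsClosed E) (hEs : E ⊆ Set.Icc A B) (hv : 0 < volume.real E) {β : ℝ}
    (hβ : ∀ x ∈ E, |q.eval x| ≤ β) {x : ℝ} (hx : x ∈ Set.Icc A B) :
    |q.eval x| ≤ β * (32 * (B - A) / volume.real E) ^ m := by
  have hEc : IsCompact E := isCompact_Icc.of_isClosed_subset hE hEs
  set v := volume.real E with hvdef
  set η := v / (m + 1) with hη
  have hηpos : 0 < η := by positivity
  have hmη : m * η < v := by
    rw [hη, mul_div_assoc', div_lt_iff₀ (by positivity)]; nlinarith
  obtain ⟨p, hpE, hsep⟩ := exists_separated m E hEc η hηpos hmη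
  have hβ0 : 0 ≤ β := (abs_nonneg _).trans (hβ _ (hpE 0 (by omega)))
  have hsep' : ∀ i ≤ m, ∀ j ≤ m, |(i : ℝ) - j| * η ≤ |p i - p j| := by
    intro i hi j hj
    rcases le_total i j with h | h
    · have h1 := hsep i j h hj
      have h2 : (i : ℝ) ≤ j := by exact_mod_cast h
      rw [abs_of_nonpos (by linarith), abs_sub_comm]
      refine le_trans ?_ (le_abs_self _)
      linarith
    · have h1 := hsep j i h hi
      have h2 : (j : ℝ) ≤ i := by exact_mod_cast h
      rw [abs_of_nonneg (by linarith)]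
      refine le_trans ?_ (le_abs_self _)
      linarith
  have hinj : Set.InjOn p (Finset.range (m + 1)) := by
    intro i hi j hj hij
    have hi' : i ≤ m := by simpa [Nat.lt_succ_iff] using hi
    have hj' : j ≤ m := by simpa [Nat.lt_succ_iff] using hj
    have := hsep' i hi' j hj'
    rw [hij, sub_self, abs_zero] at this
    have h0 : |(i : ℝ) - j| ≤ 0 := by
      by_contra h
      push Not at h
      nlinarith
    have := abs_nonpos_iff.1 h0
    exact_mod_cast sub_eq_zero.1 this
  have hdeg : q.degree < (Finset.range (m + 1)).card := by
    rw [Finset.card_range]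
    refine lt_of_le_of_lt Polynomial.degree_le_natDegree ?_
    exact_mod_cast Nat.lt_succ_of_le hq
  have hAB : 0 ≤ B - A := by linarith [hx.1, hx.2]
  have heq := Lagrange.eq_interpolate hinj hdeg
  have hbasis : ∀ i ∈ Finset.range (m + 1),
      |(Lagrange.basis (Finset.range (m + 1)) p i).eval x| ≤
        ((B - A) / η) ^ m * (2 ^ m / m.factorial) := by
    intro i hi
    have hi' : i ≤ m := by simpa [Nat.lt_succ_iff] using hi
    have hcard : ((Finset.range (m + 1)).erase i).card = m := by
      rw [Finset.card_erase_of_mem hi]; simp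
    rw [Lagrange.basis, Polynomial.eval_prod, Finset.abs_prod]
    calc ∏ j ∈ (Finset.range (m + 1)).erase i, |(Lagrange.basisDivisor (p i) (p j)).eval x|
        ≤ ∏ j ∈ (Finset.range (m + 1)).erase i, ((B - A) / η) * |(i : ℝ) - j|⁻¹ := by
          refine Finset.prod_le_prod (fun _ _ => abs_nonneg _) fun j hj => ?_
          have hj1 := (Finset.mem_erase.1 hj).1
          have hj' : j ≤ m := by
            simpa [Nat.lt_succ_iff] using (Finset.mem_erase.1 hj).2
          have hij : 0 < |(i : ℝ) - j| := by
            rw [abs_pos, sub_ne_zero]; exact_mod_cast hj1.symm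
          have h1 := hsep' i hi' j hj'
          have h2 : |x - p j| ≤ B - A := by
            have := hEs (hpE j hj')
            rw [abs_le]; constructor <;> linarith [hx.1, hx.2, this.1, this.2]
          simp only [Lagrange.basisDivisor, Polynomial.eval_mul, Polynomial.eval_C,
            Polynomial.eval_sub, Polynomial.eval_X, abs_mul, abs_inv]
          calc |p i - p j|⁻¹ * |x - p j| ≤ (|(i : ℝ) - j| * η)⁻¹ * (B - A) := by gcongr
            _ = _ := by rw [mul_inv]; ring
      _ = ((B - A) / η) ^ m * (∏ j ∈ (Finset.range (m + 1)).erase i, |(i : ℝ) - j|)⁻¹ := by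
          rw [Finset.prod_mul_distrib, Finset.prod_const, hcard, Finset.prod_inv_distrib]
      _ ≤ _ := by
          rw [prod_abs_sub m i hi']
          gcongr
          have h1 := Nat.choose_mul_factorial_mul_factorial hi'
          have h2 : m.choose i ≤ 2 ^ m := Nat.choose_le_two_pow m i
          have hle : (m.factorial : ℝ) ≤ 2 ^ m * (i.factorial * (m - i).factorial : ℕ) := by
            have : m.factorial ≤ 2 ^ m * (i.factorial * (m - i).factorial) := by
              rw [← h1, mul_assoc]; gcongr
            exact_mod_cast this
          have hf : (0 : ℝ) < m.factorial := by positivity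
          have hp : (0 : ℝ) < (i.factorial * (m - i).factorial : ℕ) := by
            exact_mod_cast Nat.mul_pos (Nat.factorial_pos _) (Nat.factorial_pos _)
          rw [inv_eq_one_div, div_le_div_iff₀ hp hf]
          linarith
  rw [heq, Lagrange.interpolate_apply, Polynomial.eval_finsetSum]
  calc |∑ i ∈ Finset.range (m + 1),
        (Polynomial.C (q.eval (p i)) * Lagrange.basis (Finset.range (m + 1)) p i).eval x|
      ≤ ∑ i ∈ Finset.range (m + 1),
        |(Polynomial.C (q.eval (p i)) * Lagrange.basis (Finset.range (m + 1)) p i).eval x| :=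
        Finset.abs_sum_le_sum_abs _ _
    _ ≤ ∑ i ∈ Finset.range (m + 1), β * (((B - A) / η) ^ m * (2 ^ m / m.factorial)) := by
        refine Finset.sum_le_sum fun i hi => ?_
        rw [Polynomial.eval_mul, Polynomial.eval_C, abs_mul]
        have hi' : i ≤ m := by simpa [Nat.lt_succ_iff] using hi
        exact mul_le_mul (hβ _ (hpE i hi')) (hbasis i hi) (abs_nonneg _) hβ0
    _ = β * (((B - A) / v) ^ m * ((m + 1 : ℝ) ^ (m + 1) * 2 ^ m / m.factorial)) := by
        have h : (B - A) / η = (m + 1) * ((B - A) / v) := by rw [hη]; field_simp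
        rw [Finset.sum_const, Finset.card_range, nsmul_eq_mul, h, mul_pow, pow_succ]
        push_cast
        ring
    _ ≤ β * (((B - A) / v) ^ m * 32 ^ m) := by
        gcongr; exact remez_const m
    _ = _ := by rw [← mul_pow]; ring_nf

/-! ### Sublevel sets of polynomials and logarithmic derivatives -/

/-- The sublevel sets of a polynomial on an interval on which it reaches the value `M` somewhere. -/
theorem sublevel_le {m : ℕ} (hm : 1 ≤ m) {q : Polynomial ℝ} (hq : q.natDegree ≤ m) {A B : ℝ}
    {M β : ℝ} (hM : 0 < M) (hβ : 0 ≤ β) {ξ : ℝ} (hξ : ξ ∈ Set.Icc A B) (hMξ : M ≤ |q.eval ξ|) :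
    volume.real {x ∈ Set.Icc A B | |q.eval x| ≤ β} ≤ 32 * (B - A) * (β / M) ^ (1 / (m : ℝ)) := by
  set E := {x ∈ Set.Icc A B | |q.eval x| ≤ β} with hE
  have hAB : 0 ≤ B - A := by linarith [hξ.1, hξ.2]
  have hm0 : (m : ℝ) ≠ 0 := by positivity
  have hEc : IsClosed E := isClosed_Icc.inter (isClosed_le q.continuous.abs continuous_const)
  rcases (measureReal_nonneg (μ := volume) (s := E)).eq_or_lt with h0 | h0
  · rw [← h0]; positivity
  have h1 := remez hq hEc (fun x hx => hx.1) h0 (fun x hx => hx.2) hξ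
  set v := volume.real E
  have h2 : (v / (32 * (B - A))) ^ m ≤ β / M := by
    have hAB' : 0 < B - A := by
      rcases hAB.eq_or_lt with h | h
      · exfalso
        rw [← h, mul_zero, zero_div, zero_pow (by omega), mul_zero] at h1
        linarith
      · exact h
    have h3 : M ≤ β * (32 * (B - A) / v) ^ m := hMξ.trans h1
    rw [le_div_iff₀ hM]
    calc (v / (32 * (B - A))) ^ m * M ≤ (v / (32 * (B - A))) ^ m * (β * (32 * (B - A) / v) ^ m) := by
          gcongr
      _ = β * ((v / (32 * (B - A))) * (32 * (B - A) / v)) ^ m := by rw [mul_pow]; ring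
      _ = β := by
        rw [div_mul_div_cancel₀ (by positivity), div_self h0.ne', one_pow, mul_one]
  have hAB' : 0 < B - A := by
    rcases hAB.eq_or_lt with h | h
    · exfalso
      rw [← h, mul_zero, zero_div, zero_pow (by omega), mul_zero] at h1
      linarith
    · exact h
  have h3 : v / (32 * (B - A)) ≤ (β / M) ^ (1 / (m : ℝ)) := by
    rw [one_div, Real.le_rpow_inv_iff_of_pos (by positivity) (by positivity) (by positivity)]
    exact_mod_cast h2
  rw [div_le_iff₀ (by positivity)] at h3
  linarith

/-- The Poisson kernel has integral at most `π`. For real `z` it vanishes, the value at `x = z` being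
`0 / 0 = 0`. -/
lemma integral_poisson_le (z : ℂ) (a b : ℝ) :
    Continuous (fun x : ℝ => |z.im| / ((x - z.re) ^ 2 + z.im ^ 2)) ∧
      ∫ x in a..b, |z.im| / ((x - z.re) ^ 2 + z.im ^ 2) ≤ Real.pi := by
  by_cases hz : z.im = 0
  · simp [hz, continuous_const, Real.pi_pos.le]
  have hpos : ∀ x : ℝ, 0 < (x - z.re) ^ 2 + z.im ^ 2 := fun x => by positivity
  have hc : Continuous (fun x : ℝ => |z.im| / ((x - z.re) ^ 2 + z.im ^ 2)) :=
    continuous_const.div (by fun_prop) fun x => (hpos x).ne'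
  refine ⟨hc, ?_⟩
  have hy : 0 < |z.im| := abs_pos.2 hz
  have hd : ∀ x ∈ Set.uIcc a b, HasDerivAt (fun x : ℝ => Real.arctan ((x - z.re) / |z.im|))
      (|z.im| / ((x - z.re) ^ 2 + z.im ^ 2)) x := by
    intro x _
    have h := (((hasDerivAt_id x).sub_const z.re).div_const |z.im|).arctan
    refine h.congr_deriv ?_
    have h2 := hpos x
    rw [← sq_abs z.im] at h2
    rw [← sq_abs z.im]
    simp only [id]
    field_simp
    ring
  rw [intervalIntegral.integral_eq_sub_of_hasDerivAt hd (hc.intervalIntegrable _ _)]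
  have h1 := Real.arctan_lt_pi_div_two ((b - z.re) / |z.im|)
  have h2 := Real.neg_pi_div_two_lt_arctan ((a - z.re) / |z.im|)
  linarith

lemma integral_poisson_sum_le (s : Multiset ℂ) (a b : ℝ) :
    Continuous (fun x : ℝ => (s.map fun z => |z.im| / ((x - z.re) ^ 2 + z.im ^ 2)).sum) ∧
      ∫ x in a..b, (s.map fun z => |z.im| / ((x - z.re) ^ 2 + z.im ^ 2)).sum
        ≤ Real.pi * Multiset.card s := by
  induction s using Multiset.induction with
  | empty => simp [continuous_const]
  | cons z s ih =>
    obtain ⟨h1, h2⟩ := integral_poisson_le z a b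
    simp only [Multiset.map_cons, Multiset.sum_cons, Multiset.card_cons]
    refine ⟨h1.add ih.1, ?_⟩
    rw [intervalIntegral.integral_add (h1.intervalIntegrable _ _) (ih.1.intervalIntegrable _ _)]
    push_cast
    linarith [ih.2]

/-- The total variation of `arctan (q / β)` is at most `π m`. The integrand is the absolute imaginary
part of the logarithmic derivative of `q + iβ`, which is bounded by a sum of `m` Poisson kernels, one
for each complex root. -/
theorem integral_abs_deriv_mul_le {m : ℕ} {q : Polynomial ℝ} (hq : q.natDegree ≤ m) {a b β : ℝ}
    (hab : a ≤ b) (hβ : 0 < β) :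
    ∫ x in a..b, |q.derivative.eval x| * β / (β ^ 2 + q.eval x ^ 2) ≤ Real.pi * m := by
  set p : Polynomial ℂ := q.map Complex.ofRealHom + Polynomial.C (Complex.I * β) with hp
  have hpd : p.natDegree ≤ m := by
    refine (Polynomial.natDegree_add_le _ _).trans ?_
    simp only [Polynomial.natDegree_C, max_le_iff, zero_le, and_true]
    exact (Polynomial.natDegree_map_le).trans hq
  have hev : ∀ x : ℝ, p.eval (x : ℂ) = q.eval x + Complex.I * β := by
    intro x
    rw [hp, Polynomial.eval_add, Polynomial.eval_C]
    congr 1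
    exact Polynomial.eval_map_apply (f := Complex.ofRealHom) x
  have hev' : ∀ x : ℝ, p.derivative.eval (x : ℂ) = q.derivative.eval x := by
    intro x
    rw [hp, Polynomial.derivative_add, Polynomial.derivative_C, add_zero, Polynomial.derivative_map]
    exact Polynomial.eval_map_apply (f := Complex.ofRealHom) x
  have hne : ∀ x : ℝ, p.eval (x : ℂ) ≠ 0 := by
    intro x h
    rw [hev] at h
    have := congrArg Complex.im h
    simp at this
    exact hβ.ne' this
  obtain ⟨hc, hint⟩ := integral_poisson_sum_le p.roots a b
  have hpt : ∀ x : ℝ, |q.derivative.eval x| * β / (β ^ 2 + q.eval x ^ 2) ≤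
      (p.roots.map fun z => |z.im| / ((x - z.re) ^ 2 + z.im ^ 2)).sum := by
    intro x
    have h := (IsAlgClosed.splits p).eval_derivative_div_eval_of_ne_zero (hne x)
    have h' := congrArg (fun w : ℂ => |w.im|) h
    have hl : |(p.derivative.eval (x : ℂ) / p.eval (x : ℂ)).im|
        = |q.derivative.eval x| * β / (β ^ 2 + q.eval x ^ 2) := by
      rw [hev, hev', Complex.div_im]
      have hn : Complex.normSq (((q.eval x : ℝ) : ℂ) + Complex.I * β) = β ^ 2 + q.eval x ^ 2 := by
        simp [Complex.normSq_apply]; ring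
      rw [hn]
      simp [abs_div, abs_mul, abs_of_pos hβ]
      rw [abs_of_pos (a := β ^ 2 + _) (by positivity)]
    rw [← hl, h']
    have hsum : ∀ s : Multiset ℂ, |((s.map fun z => 1 / ((x : ℂ) - z)).sum).im| ≤
        (s.map fun z => |z.im| / ((x - z.re) ^ 2 + z.im ^ 2)).sum := by
      intro s
      induction s using Multiset.induction with
      | empty => simp
      | cons z s ih =>
        simp only [Multiset.map_cons, Multiset.sum_cons, Complex.add_im]
        refine (abs_add_le _ _).trans (add_le_add (le_of_eq ?_) ih)
        rw [one_div, Complex.inv_im, Complex.normSq_apply]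
        simp only [Complex.sub_im, Complex.ofReal_im, Complex.sub_re, Complex.ofReal_re, zero_sub,
          neg_neg, abs_div]
        rw [abs_of_nonneg (a := (x - z.re) * (x - z.re) + _)
          (add_nonneg (mul_self_nonneg _) (mul_self_nonneg _))]
        ring_nf
    exact hsum _
  have hcont : Continuous fun x : ℝ => |q.derivative.eval x| * β / (β ^ 2 + q.eval x ^ 2) :=
    Continuous.div (by fun_prop) (by fun_prop) fun x => by positivity
  calc _ ≤ ∫ x in a..b, (p.roots.map fun z => |z.im| / ((x - z.re) ^ 2 + z.im ^ 2)).sum :=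
        intervalIntegral.integral_mono_on hab (hcont.intervalIntegrable _ _)
          (hc.intervalIntegrable _ _) fun x _ => hpt x
    _ ≤ Real.pi * Multiset.card p.roots := hint
    _ ≤ _ := by
        gcongr
        exact_mod_cast (Polynomial.card_roots' p).trans hpd

/-! ### Oscillatory integrals with a polynomial phase -/

/-- The oscillating factor `e^{isg}` along a real polynomial `g`. -/
def osc (s : ℝ) (g : Polynomial ℝ) (x : ℝ) : ℂ := Complex.exp (Complex.I * ((s * g.eval x : ℝ) : ℂ))

lemma norm_osc (s : ℝ) (g : Polynomial ℝ) (x : ℝ) : ‖osc s g x‖ = 1 := by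
  rw [osc, mul_comm, Complex.norm_exp_ofReal_mul_I]

lemma continuous_osc (s : ℝ) (g : Polynomial ℝ) : Continuous (osc s g) := by
  unfold osc; fun_prop

lemma hasDerivAt_osc (s : ℝ) (g : Polynomial ℝ) (x : ℝ) :
    HasDerivAt (osc s g) (osc s g x * (Complex.I * ((s * g.derivative.eval x : ℝ) : ℂ))) x := by
  have h := (((g.hasDerivAt x).const_mul s).ofReal_comp.const_mul Complex.I).cexp
  exact h

/-- Integration by parts when the amplitude contains the derivative of the phase as a factor. -/
theorem norm_integral_osc_mul_deriv_le (g : Polynomial ℝ) {t : ℝ} (ht : t ≠ 0) {a b : ℝ}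
    (hab : a ≤ b) {U U' : ℝ → ℝ} (hU : ∀ x, HasDerivAt U (U' x) x) (hU' : Continuous U') :
    ‖∫ x in a..b, osc t g x * ((g.derivative.eval x * U x : ℝ) : ℂ)‖ ≤
      (|U a| + |U b| + ∫ x in a..b, |U' x|) / |t| := by
  have hUc : Continuous U := continuous_iff_continuousAt.2 fun x => (hU x).continuousAt
  have hoc := continuous_osc t g
  have hpart := intervalIntegral.integral_mul_deriv_eq_deriv_mul (a := a) (b := b)
    (u := fun x => (U x : ℂ)) (u' := fun x => (U' x : ℂ)) (v := osc t g)
    (fun x _ => (hU x).ofReal_comp) (fun x _ => hasDerivAt_osc t g x)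
    (by apply Continuous.intervalIntegrable; fun_prop)
    (by apply Continuous.intervalIntegrable; fun_prop)
  have hlhs : (∫ x in a..b, (U x : ℂ) * (osc t g x * (Complex.I * ((t * g.derivative.eval x : ℝ) : ℂ))))
      = (Complex.I * t) * ∫ x in a..b, osc t g x * ((g.derivative.eval x * U x : ℝ) : ℂ) := by
    rw [← intervalIntegral.integral_const_mul]
    congr 1
    ext x
    push_cast
    ring
  rw [hlhs] at hpart
  have hn := congrArg norm hpart
  rw [norm_mul, norm_mul, Complex.norm_I, one_mul, Complex.norm_real, Real.norm_eq_abs] at hn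
  rw [le_div_iff₀ (abs_pos.2 ht), mul_comm, hn]
  refine (norm_sub_le _ _).trans (add_le_add ((norm_sub_le _ _).trans ?_) ?_)
  · rw [norm_mul, norm_mul, norm_osc, norm_osc, Complex.norm_real, Complex.norm_real]
    simp [add_comm]
  · refine (intervalIntegral.norm_integral_le_integral_norm hab).trans (le_of_eq ?_)
    simp [norm_osc]

/-- The sublevel estimate, integrated against the Cauchy weight that replaces the indicator function
of `|q| ≤ β`. -/
lemma integral_cauchy_le {m : ℕ} (hm : 1 ≤ m) {q : Polynomial ℝ} (hq : q.natDegree ≤ m) {A B : ℝ}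
    {M β : ℝ} (hM : 0 < M) (hβ : 0 < β) {ξ : ℝ} (hξ : ξ ∈ Set.Icc A B) (hMξ : M ≤ |q.eval ξ|) :
    ∫ x in A..B, β ^ 2 / (β ^ 2 + q.eval x ^ 2) ≤ 64 * (B - A) * (β / M) ^ (1 / (m : ℝ)) := by
  have hAB : A ≤ B := hξ.1.trans hξ.2
  have hcont : Continuous fun x : ℝ => β ^ 2 / (β ^ 2 + q.eval x ^ 2) :=
    Continuous.div (by fun_prop) (by fun_prop) fun x => by positivity
  rw [intervalIntegral.integral_of_le hAB, ← integral_Icc_eq_integral_Ioc]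
  have hint : Integrable (fun x : ℝ => β ^ 2 / (β ^ 2 + q.eval x ^ 2))
      (volume.restrict (Set.Icc A B)) := hcont.integrableOn_Icc
  rw [hint.integral_eq_integral_meas_lt (Filter.Eventually.of_forall fun x => by positivity)]
  set K := 32 * (B - A) * (β / M) ^ (1 / (m : ℝ)) with hK
  have hK0 : 0 ≤ K := by
    have : 0 ≤ B - A := by linarith
    positivity
  have hbound : ∀ θ ∈ Set.Ioi (0 : ℝ),
      (volume.restrict (Set.Icc A B)).real {x : ℝ | θ < β ^ 2 / (β ^ 2 + q.eval x ^ 2)} ≤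
        (Set.Ioc (0 : ℝ) 1).indicator (fun θ => K * θ ^ (-(1 / 2) : ℝ)) θ := by
    intro θ hθ
    have hθ0 : (0 : ℝ) < θ := hθ
    by_cases h1 : θ ≤ 1
    · rw [Set.indicator_of_mem (show θ ∈ Set.Ioc (0 : ℝ) 1 from ⟨hθ0, h1⟩)]
      rw [measureReal_restrict_apply' measurableSet_Icc]
      have hsub : {x : ℝ | θ < β ^ 2 / (β ^ 2 + q.eval x ^ 2)} ∩ Set.Icc A B ⊆
          {x ∈ Set.Icc A B | |q.eval x| ≤ β * θ ^ (-(1 / 2) : ℝ)} := by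
        rintro x ⟨hx, hxI⟩
        refine ⟨hxI, ?_⟩
        have hx' : θ < β ^ 2 / (β ^ 2 + q.eval x ^ 2) := hx
        rw [lt_div_iff₀ (by positivity)] at hx'
        refine abs_le_of_sq_le_sq ?_ (by positivity)
        rw [mul_pow, ← Real.rpow_natCast, ← Real.rpow_natCast (θ ^ _), ← Real.rpow_mul hθ0.le]
        norm_num
        rw [Real.rpow_neg_one, ← div_eq_mul_inv, le_div_iff₀ hθ0]
        nlinarith [sq_nonneg β]
      have hfin : volume {x ∈ Set.Icc A B | |q.eval x| ≤ β * θ ^ (-(1 / 2) : ℝ)} ≠ ⊤ :=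
        ((measure_mono (fun x hx => hx.1)).trans_lt (measure_Icc_lt_top (a := A) (b := B))).ne
      refine (measureReal_mono hsub hfin).trans ?_
      refine (sublevel_le hm hq hM (by positivity) hξ hMξ).trans ?_
      have hexp : (β * θ ^ (-(1 / 2) : ℝ) / M) ^ (1 / (m : ℝ))
          ≤ (β / M) ^ (1 / (m : ℝ)) * θ ^ (-(1 / 2) : ℝ) := by
        rw [mul_div_right_comm, Real.mul_rpow (by positivity) (by positivity), ← Real.rpow_mul hθ0.le]
        refine mul_le_mul_of_nonneg_left ?_ (by positivity)
        apply Real.rpow_le_rpow_of_exponent_ge hθ0 h1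
        have : 1 / (m : ℝ) ≤ 1 := by
          rw [div_le_one (by positivity)]; exact_mod_cast hm
        linarith
      calc 32 * (B - A) * (β * θ ^ (-(1 / 2) : ℝ) / M) ^ (1 / (m : ℝ))
          ≤ 32 * (B - A) * ((β / M) ^ (1 / (m : ℝ)) * θ ^ (-(1 / 2) : ℝ)) :=
            mul_le_mul_of_nonneg_left hexp (by linarith)
        _ = K * θ ^ (-(1 / 2) : ℝ) := by rw [hK]; ring
    · rw [Set.indicator_of_notMem (fun h => h1 h.2)]
      have : {x : ℝ | θ < β ^ 2 / (β ^ 2 + q.eval x ^ 2)} = ∅ := by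
        ext x
        simp only [Set.mem_ofPred_eq, Set.mem_empty_iff_false, iff_false, not_lt]
        have : β ^ 2 / (β ^ 2 + q.eval x ^ 2) ≤ 1 := by
          rw [div_le_one (by positivity)]; nlinarith [sq_nonneg (q.eval x)]
        linarith
      rw [this]; simp
  have hI : IntegrableOn (fun θ : ℝ => K * θ ^ (-(1 / 2) : ℝ)) (Set.Ioc 0 1) := by
    have := (intervalIntegral.intervalIntegrable_rpow' (a := 0) (b := 1) (r := (-(1 / 2) : ℝ))
      (by norm_num)).const_mul K
    rwa [intervalIntegrable_iff_integrableOn_Ioc_of_le zero_le_one] at this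
  have hI' : IntegrableOn ((Set.Ioc (0 : ℝ) 1).indicator (fun θ => K * θ ^ (-(1 / 2) : ℝ)))
      (Set.Ioi 0) := (hI.integrable_indicator measurableSet_Ioc).integrableOn
  calc _ ≤ ∫ θ in Set.Ioi (0 : ℝ), (Set.Ioc (0 : ℝ) 1).indicator (fun θ => K * θ ^ (-(1 / 2) : ℝ)) θ := by
        refine integral_mono_of_nonneg (Filter.Eventually.of_forall fun θ => measureReal_nonneg) hI' ?_
        filter_upwards [ae_restrict_mem measurableSet_Ioi] with θ hθ using hbound θ hθ
    _ = ∫ θ in Set.Ioc (0 : ℝ) 1, K * θ ^ (-(1 / 2) : ℝ) := by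
        rw [setIntegral_indicator measurableSet_Ioc]
        congr 2
        ext x; simp +contextual
    _ = K * 2 := by
        rw [← intervalIntegral.integral_of_le zero_le_one, intervalIntegral.integral_const_mul,
          integral_rpow (Or.inl (by norm_num))]
        norm_num
    _ = _ := by rw [hK]; ring

/-! ### Oscillatory integrals over an interval -/

/-- The mean value theorem: `g` oscillates by `S` on `[A, B]`, so its derivative is somewhere as large
as `S / (B - A)`. -/
lemma exists_large_deriv {g : Polynomial ℝ} {A B S : ℝ} (hS : 0 < S)
    (hxy : ∃ x ∈ Set.Icc A B, ∃ y ∈ Set.Icc A B, S ≤ |g.eval x - g.eval y|) :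
    A < B ∧ ∃ ξ ∈ Set.Icc A B, S / (B - A) ≤ |g.derivative.eval ξ| := by
  obtain ⟨x, hx, y, hy, h⟩ := hxy
  wlog hlt : x < y generalizing x y
  · rcases (not_lt.1 hlt).eq_or_lt with h' | h'
    · rw [h', sub_self, abs_zero] at h; linarith
    · exact this y hy x hx (by rwa [abs_sub_comm]) h'
  have hAB : A < B := by linarith [hx.1, hy.2]
  refine ⟨hAB, ?_⟩
  obtain ⟨ξ, hξ, he⟩ := exists_hasDerivAt_eq_slope (fun x => g.eval x) (fun x => g.derivative.eval x)
    hlt g.continuous.continuousOn fun z _ => g.hasDerivAt z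
  refine ⟨ξ, ⟨hx.1.trans hξ.1.le, hξ.2.le.trans hy.2⟩, ?_⟩
  rw [he, abs_div, abs_sub_comm, abs_of_pos (sub_pos.2 hlt)]
  have h1 : y - x ≤ B - A := by linarith [hx.1, hy.2]
  have h2 : 0 < y - x := by linarith
  gcongr

lemma interval_bound_one {g : Polynomial ℝ} (hg : g.natDegree ≤ 1) {A B a b S t N : ℝ}
    (hAa : A ≤ a) (hab : a ≤ b) (hbB : b ≤ B) (hS : 0 < S) (ht : t ≠ 0)
    (hxy : ∃ x ∈ Set.Icc A B, ∃ y ∈ Set.Icc A B, S ≤ |g.eval x - g.eval y|)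
    {V V' : ℝ → ℝ} (hV : ∀ x, HasDerivAt V (V' x) x) (hV' : Continuous V')
    (hN : ∀ x ∈ Set.Icc A B, |V x| ≤ N) (hTV : ∫ x in A..B, |V' x| ≤ N) :
    ‖∫ x in a..b, osc t g x * (V x : ℂ)‖ ≤ 3 * N * (B - A) * (|t| * S)⁻¹ := by
  obtain ⟨hAB, ξ, hξ, hk⟩ := exists_large_deriv hS hxy
  set k := g.derivative.eval ξ with hkdef
  have hconst : ∀ x, g.derivative.eval x = k := by
    have hd : g.derivative.natDegree = 0 := by
      have := Polynomial.natDegree_derivative_le g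
      omega
    rw [Polynomial.natDegree_eq_zero] at hd
    obtain ⟨c, hc⟩ := hd
    intro x; rw [hkdef, ← hc]; simp
  have hℓ : 0 < B - A := by linarith
  have hkpos : 0 < |k| := lt_of_lt_of_le (by positivity) hk
  have hk0 : k ≠ 0 := abs_pos.1 hkpos
  have h := norm_integral_osc_mul_deriv_le g ht hab (U := fun x => V x / k) (U' := fun x => V' x / k)
    (fun x => (hV x).div_const k) (hV'.div_const k)
  have he : ∀ x, g.derivative.eval x * (V x / k) = V x := fun x => by
    rw [hconst x, mul_div_cancel₀ _ hk0]
  simp only [he] at h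
  refine h.trans ?_
  have h1 := hN a ⟨hAa, hab.trans hbB⟩
  have h2 := hN b ⟨hAa.trans hab, hbB⟩
  have h3 : ∫ x in a..b, |V' x / k| ≤ N / |k| := by
    simp only [abs_div, intervalIntegral.integral_div]
    gcongr
    refine le_trans ?_ hTV
    exact intervalIntegral.integral_mono_interval hAa hab hbB
      (Filter.Eventually.of_forall fun x => abs_nonneg _) (hV'.abs.intervalIntegrable _ _)
  have hN0 : 0 ≤ N := (abs_nonneg _).trans h1
  calc _ ≤ (N / |k| + N / |k| + N / |k|) / |t| := by
        simp only [abs_div]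
        simp only [abs_div] at h3
        gcongr
    _ = 3 * N * (|t| * |k|)⁻¹ := by field_simp; ring
    _ ≤ 3 * N * (|t| * (S / (B - A)))⁻¹ := by
        have : 0 < |t| := abs_pos.2 ht
        gcongr
    _ = _ := by field_simp

lemma rpow_inv_succ_le {m : ℕ} (hm : 1 ≤ m) : ((m : ℝ) + 1) ^ (1 / (m : ℝ)) ≤ 2 := by
  have h2 : (m + 1 : ℝ) ≤ 2 ^ m := by exact_mod_cast Nat.lt_two_pow_self (n := m)
  have hm0 : (0 : ℝ) < m := by exact_mod_cast hm
  rw [one_div, Real.rpow_inv_le_iff_of_pos (by positivity) (by norm_num) hm0]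
  exact_mod_cast h2

/-- The amplitude is split by `1 = β² / (β² + g'²) + g'² / (β² + g'²)`. The first weight is concentrated
where `g'` is small, and is estimated by the size of sublevel sets; the second has `g'` as a factor,
and is integrated by parts. The variation it creates is at most of order `m / β`. -/
theorem interval_bound_succ {m : ℕ} (hm : 1 ≤ m) {g : Polynomial ℝ} (hg : g.natDegree ≤ m + 1)
    {A B a b S t N : ℝ}
    (hAa : A ≤ a) (hab : a ≤ b) (hbB : b ≤ B) (hS : 0 < S) (ht : t ≠ 0)
    (hxy : ∃ x ∈ Set.Icc A B, ∃ y ∈ Set.Icc A B, S ≤ |g.eval x - g.eval y|)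
    {V V' : ℝ → ℝ} (hV : ∀ x, HasDerivAt V (V' x) x) (hV' : Continuous V')
    (hN : ∀ x ∈ Set.Icc A B, |V x| ≤ N) (hTV : ∫ x in A..B, |V' x| ≤ (m + 1) * N) :
    ‖∫ x in a..b, osc t g x * (V x : ℂ)‖ ≤
      133 * N * (B - A) * (|t| * S) ^ (-(1 / ((m : ℝ) + 1))) := by
  obtain ⟨hAB, ξ, hξ, hk⟩ := exists_large_deriv hS hxy
  have hℓ : 0 < B - A := by linarith
  have htp : 0 < |t| := abs_pos.2 ht
  have hm0 : (0 : ℝ) < m := by exact_mod_cast hm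
  have hm1 : (1 : ℝ) ≤ m := by exact_mod_cast hm
  set q := g.derivative with hq
  have hqd : q.natDegree ≤ m := by
    have : q.natDegree ≤ g.natDegree - 1 := Polynomial.natDegree_derivative_le g
    omega
  set T := |t| * S with hT
  have hTp : 0 < T := by positivity
  set M := S / (B - A) with hM
  have hMp : 0 < M := by positivity
  -- The threshold that balances the two contributions.
  set β := (m + 1) * M * T ^ (-((m : ℝ) / (m + 1))) with hβ
  have hβp : 0 < β := by positivity
  have hNn : 0 ≤ N := (abs_nonneg _).trans (hN a ⟨hAa, hab.trans hbB⟩)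
  have hVc : Continuous V := continuous_iff_continuousAt.2 fun x => (hV x).continuousAt
  have hoc := continuous_osc t g
  have hden : ∀ x, 0 < β ^ 2 + q.eval x ^ 2 := fun x => by positivity
  set φ : ℝ → ℝ := fun x => β ^ 2 / (β ^ 2 + q.eval x ^ 2) with hφ
  set U : ℝ → ℝ := fun x => V x * (q.eval x / (β ^ 2 + q.eval x ^ 2)) with hU
  set U' : ℝ → ℝ := fun x => V' x * (q.eval x / (β ^ 2 + q.eval x ^ 2)) +
    V x * ((q.derivative.eval x * (β ^ 2 + q.eval x ^ 2) -
      q.eval x * (2 * q.eval x * q.derivative.eval x)) / (β ^ 2 + q.eval x ^ 2) ^ 2) with hU'def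
  have hφc : Continuous φ := Continuous.div (by fun_prop) (by fun_prop) fun x => (hden x).ne'
  have hU'c : Continuous U' := by
    refine (hV'.mul (Continuous.div (by fun_prop) (by fun_prop) fun x => (hden x).ne')).add
      (hVc.mul (Continuous.div (by fun_prop) (by fun_prop) fun x => (pow_pos (hden x) 2).ne'))
  have hUd : ∀ x, HasDerivAt U (U' x) x := by
    intro x
    refine (hV x).mul ?_
    have h1 := q.hasDerivAt x
    have h2 := (h1.pow 2).const_add (β ^ 2)
    refine (h1.div h2 (hden x).ne').congr_deriv ?_
    simp
  have hUc : Continuous U := continuous_iff_continuousAt.2 fun x => (hUd x).continuousAt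
  have hsplit : (∫ x in a..b, osc t g x * (V x : ℂ)) =
      (∫ x in a..b, osc t g x * ((V x * φ x : ℝ) : ℂ)) +
        ∫ x in a..b, osc t g x * ((q.eval x * U x : ℝ) : ℂ) := by
    rw [← intervalIntegral.integral_add]
    · congr 1
      ext x
      rw [← mul_add, ← Complex.ofReal_add]
      congr 2
      simp only [hφ, hU]
      have := (hden x).ne'
      field_simp
    · apply Continuous.intervalIntegrable; fun_prop
    · apply Continuous.intervalIntegrable; fun_prop
  have hq_le : ∀ x, |q.eval x / (β ^ 2 + q.eval x ^ 2)| ≤ 1 / (2 * β) := by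
    intro x
    rw [abs_div, abs_of_pos (hden x), div_le_div_iff₀ (hden x) (by positivity)]
    have := sq_nonneg (β - |q.eval x|)
    rw [sub_sq, sq_abs] at this
    linarith
  have hV_int : ∀ {c : ℝ → ℝ}, Continuous c → (∀ x, 0 ≤ c x) →
      ∫ x in a..b, c x ≤ ∫ x in A..B, c x := fun hc h0 =>
    intervalIntegral.integral_mono_interval hAa hab hbB
      (Filter.Eventually.of_forall fun x => h0 x) (hc.intervalIntegrable _ _)
  -- The part where `g'` is small.
  have hfirst : ‖∫ x in a..b, osc t g x * ((V x * φ x : ℝ) : ℂ)‖ ≤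
      128 * N * (B - A) * T ^ (-(1 / ((m : ℝ) + 1))) := by
    have h1 : ‖∫ x in a..b, osc t g x * ((V x * φ x : ℝ) : ℂ)‖ ≤ ∫ x in a..b, N * φ x := by
      apply intervalIntegral.norm_integral_le_of_norm_le hab
      · refine Filter.Eventually.of_forall fun x hx => ?_
        have hφ0 : 0 ≤ φ x := by positivity
        rw [norm_mul, norm_osc, one_mul, Complex.norm_real, Real.norm_eq_abs, abs_mul,
          abs_of_nonneg hφ0]
        exact mul_le_mul_of_nonneg_right (hN x ⟨hAa.trans hx.1.le, hx.2.trans hbB⟩) hφ0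
      · exact (continuous_const.mul hφc).intervalIntegrable _ _
    rw [intervalIntegral.integral_const_mul] at h1
    have h2 := hV_int hφc fun x => by positivity
    have h3 := integral_cauchy_le hm hqd hMp hβp hξ hk
    have h4 : (β / M) ^ (1 / (m : ℝ)) ≤ 2 * T ^ (-(1 / ((m : ℝ) + 1))) := by
      have : β / M = (m + 1) * T ^ (-((m : ℝ) / (m + 1))) := by
        rw [hβ]; field_simp
      rw [this, Real.mul_rpow (by positivity) (by positivity), ← Real.rpow_mul hTp.le]
      have he : -((m : ℝ) / (m + 1)) * (1 / m) = -(1 / ((m : ℝ) + 1)) := by field_simp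
      rw [he]
      gcongr
      exact rpow_inv_succ_le hm
    calc _ ≤ N * (64 * (B - A) * (2 * T ^ (-(1 / ((m : ℝ) + 1))))) := by
          refine h1.trans (mul_le_mul_of_nonneg_left ?_ hNn)
          refine h2.trans (h3.trans ?_)
          gcongr
      _ = _ := by ring
  -- The part where `g'` is large, integrated by parts.
  have hsecond : ‖∫ x in a..b, osc t g x * ((q.eval x * U x : ℝ) : ℂ)‖ ≤
      5 * N * (B - A) * T ^ (-(1 / ((m : ℝ) + 1))) := by
    refine (norm_integral_osc_mul_deriv_le g ht hab hUd hU'c).trans ?_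
    have hUb : ∀ x ∈ Set.Icc A B, |U x| ≤ N * (1 / (2 * β)) := by
      intro x hx
      simp only [hU]
      rw [abs_mul]
      exact mul_le_mul (hN x hx) (hq_le x) (abs_nonneg _) hNn
    have hU'b : ∀ x ∈ Set.Icc A B, |U' x| ≤ |V' x| * (1 / (2 * β)) +
        (N / β) * (|q.derivative.eval x| * β / (β ^ 2 + q.eval x ^ 2)) := by
      intro x hx
      simp only [hU'def]
      refine (abs_add_le _ _).trans (add_le_add ?_ ?_)
      · rw [abs_mul]
        exact mul_le_mul_of_nonneg_left (hq_le x) (abs_nonneg _)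
      · rw [abs_mul]
        have hd := hden x
        have : |(q.derivative.eval x * (β ^ 2 + q.eval x ^ 2) -
            q.eval x * (2 * q.eval x * q.derivative.eval x)) / (β ^ 2 + q.eval x ^ 2) ^ 2| ≤
            |q.derivative.eval x| / (β ^ 2 + q.eval x ^ 2) := by
          rw [abs_div, abs_of_pos (pow_pos hd 2), div_le_div_iff₀ (pow_pos hd 2) hd]
          have e : q.derivative.eval x * (β ^ 2 + q.eval x ^ 2) -
            q.eval x * (2 * q.eval x * q.derivative.eval x) =
              q.derivative.eval x * (β ^ 2 - q.eval x ^ 2) := by ring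
          rw [e, abs_mul, pow_two (β ^ 2 + _), ← mul_assoc]
          have h5 : |β ^ 2 - q.eval x ^ 2| ≤ β ^ 2 + q.eval x ^ 2 := by
            rw [abs_le]; constructor <;> nlinarith [sq_nonneg β, sq_nonneg (q.eval x)]
          gcongr
        calc _ ≤ N * (|q.derivative.eval x| / (β ^ 2 + q.eval x ^ 2)) :=
              mul_le_mul (hN x hx) this (abs_nonneg _) hNn
          _ = _ := by field_simp
    have hpc : Continuous fun x => |q.derivative.eval x| * β / (β ^ 2 + q.eval x ^ 2) :=
      Continuous.div (by fun_prop) (by fun_prop) fun x => (hden x).ne'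
    have hint : ∫ x in a..b, |U' x| ≤ (m + 1) * N * (1 / (2 * β)) + (N / β) * (Real.pi * m) := by
      refine (hV_int hU'c.abs fun x => abs_nonneg _).trans ?_
      calc ∫ x in A..B, |U' x| ≤ ∫ x in A..B, (|V' x| * (1 / (2 * β)) +
            (N / β) * (|q.derivative.eval x| * β / (β ^ 2 + q.eval x ^ 2))) := by
            refine intervalIntegral.integral_mono_on hAB.le (hU'c.abs.intervalIntegrable _ _) ?_ hU'b
            apply Continuous.intervalIntegrable
            exact (hV'.abs.mul continuous_const).add (continuous_const.mul hpc)
        _ = (∫ x in A..B, |V' x|) * (1 / (2 * β)) +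
            (N / β) * ∫ x in A..B, |q.derivative.eval x| * β / (β ^ 2 + q.eval x ^ 2) := by
            rw [intervalIntegral.integral_add, intervalIntegral.integral_mul_const,
              intervalIntegral.integral_const_mul]
            · exact (hV'.abs.mul continuous_const).intervalIntegrable _ _
            · exact (continuous_const.mul hpc).intervalIntegrable _ _
        _ ≤ _ := by
            gcongr
            exact integral_abs_deriv_mul_le hqd hAB.le hβp
    have hpi : Real.pi ≤ 3.15 := Real.pi_lt_d2.le
    calc _ ≤ (N * (1 / (2 * β)) + N * (1 / (2 * β)) +
          ((m + 1) * N * (1 / (2 * β)) + (N / β) * (3.15 * m))) / |t| := by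
          gcongr
          · exact hUb a ⟨hAa, hab.trans hbB⟩
          · exact hUb b ⟨hAa.trans hab, hbB⟩
          · exact hint.trans (by gcongr)
      _ = (N / (β * |t|)) * (1 + (m + 1) / 2 + 3.15 * m) := by field_simp; ring
      _ ≤ (N / (β * |t|)) * (5 * (m + 1)) := by gcongr; linarith
      _ = 5 * N * (B - A) * T ^ (-(1 / ((m : ℝ) + 1))) := by
          have h6 : T ^ (-(1 / ((m : ℝ) + 1))) = T ^ ((m : ℝ) / (m + 1)) * T⁻¹ := by
            rw [← Real.rpow_neg_one T, ← Real.rpow_add hTp]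
            congr 1
            field_simp
            ring
          rw [h6, hβ, Real.rpow_neg hTp.le, hM, hT]
          have : 0 < (|t| * S) ^ ((m : ℝ) / (m + 1)) := by positivity
          field_simp
  rw [hsplit]
  refine (norm_add_le _ _).trans ((add_le_add hfirst hsecond).trans (le_of_eq ?_))
  ring

/-- The oscillatory integral over an interval `[a, b]` contained in `[A, B]`, with absolute constant.
The oscillation `S` of the phase is measured on the larger interval. -/
theorem interval_bound {d : ℕ} (hd : 1 ≤ d) {g : Polynomial ℝ} (hg : g.natDegree ≤ d)
    {A B a b S t N : ℝ}
    (hAa : A ≤ a) (hab : a ≤ b) (hbB : b ≤ B) (hS : 0 < S) (ht : t ≠ 0)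
    (hxy : ∃ x ∈ Set.Icc A B, ∃ y ∈ Set.Icc A B, S ≤ |g.eval x - g.eval y|)
    {V V' : ℝ → ℝ} (hV : ∀ x, HasDerivAt V (V' x) x) (hV' : Continuous V')
    (hN : ∀ x ∈ Set.Icc A B, |V x| ≤ N) (hTV : ∫ x in A..B, |V' x| ≤ d * N) :
    ‖∫ x in a..b, osc t g x * (V x : ℂ)‖ ≤
      133 * N * (B - A) * (|t| * S) ^ (-(1 / (d : ℝ))) := by
  obtain ⟨m, rfl⟩ : ∃ m, d = m + 1 := ⟨d - 1, by omega⟩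
  rcases Nat.eq_zero_or_pos m with rfl | hm
  · have h := interval_bound_one hg hAa hab hbB hS ht hxy hV hV' hN (by simpa using hTV)
    have h0 : 0 ≤ N := (abs_nonneg _).trans (hN a ⟨hAa, hab.trans hbB⟩)
    have h1 : 0 ≤ B - A := by linarith
    refine h.trans ?_
    have : -(1 / ((0 + 1 : ℕ) : ℝ)) = -1 := by norm_num
    rw [this, Real.rpow_neg_one]
    gcongr
    norm_num
  · have h := interval_bound_succ hm hg hAa hab hbB hS ht hxy hV hV' hN (by exact_mod_cast hTV)
    exact_mod_cast h

/-! ### Amplitudes and needles -/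

/-- A bounded amplitude `W`, with derivative `W'` of order `1 / (1 + v²)`, dominated by a `1`-Lipschitz
function `H`. On the cube, `H ∘ f` has integral zero; this prevents `W ∘ f` from being
large unless `f` oscillates. -/
structure Amplitude (W W' H : ℝ → ℝ) : Prop where
  deriv : ∀ v, HasDerivAt W (W' v) v
  cont : Continuous W'
  bound : ∀ v, |W v| ≤ 2
  dbound : ∀ v, |W' v| ≤ 2 / (1 + v ^ 2)
  le : ∀ v, |W v| ≤ 2 * |H v|
  lip : ∀ u v, |H u - H v| ≤ |u - v|

/-- A density on `[0, 1]` with the two properties of the marginals of convex bodies in dimension `n`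
used below: it is log-concave (`logconc`), and it cannot drop faster than under a contraction of
ratio `1 - r` towards a point of the support, which multiplies the `(n - 1)`-dimensional volumes of
sections by `(1 - r) ^ (n - 1)` (`dilate`). -/
structure Needle (n : ℕ) (w : ℝ → ℝ) : Prop where
  meas : Measurable w
  nonneg : ∀ x, 0 ≤ w x
  bdd : ∃ M, ∀ x, w x ≤ M
  supp : ∀ x, x ∉ Set.Icc (0 : ℝ) 1 → w x = 0
  int_one : ∫ x, w x = 1
  logconc : ∀ x y s, 0 < s → s < 1 → w x ^ (1 - s) * w y ^ s ≤ w ((1 - s) * x + s * y)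
  dilate : ∀ x y r, 0 < w x → 0 ≤ r → r < 1 → (1 - r) ^ (n - 1) * w y ≤ w ((1 - r) * y + r * x)

lemma Amplitude.lipW {W W' H : ℝ → ℝ} (h : Amplitude W W' H) (u v : ℝ) :
    |W u - W v| ≤ 2 * |u - v| := by
  have := Convex.norm_image_sub_le_of_norm_hasDerivWithin_le (f := W) (f' := W') (s := Set.univ)
    (C := 2) (x := v) (y := u) (fun x _ => (h.deriv x).hasDerivWithinAt) (fun x _ => by
      refine (h.dbound x).trans ?_
      rw [div_le_iff₀ (by positivity)]
      nlinarith [sq_nonneg x]) convex_univ (Set.mem_univ _) (Set.mem_univ _)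
  simpa using this

/-- Log-concavity makes the superlevel sets grow at most logarithmically, compared with the level
`M / 4`. The point `y` is one where `w` almost attains the value `M`. -/
lemma Needle.width_log {n : ℕ} {w : ℝ → ℝ} (h : Needle n w) {M ℓ τ y p q : ℝ} (hM : 0 < M)
    (hy : 0.9 * M < w y) (hℓ : ∀ x z, M / 4 < w x → M / 4 < w z → z - x ≤ ℓ)
    (hτ : 0 < τ) (hτM : τ < M) (hp : τ < w p) (hq : τ < w q) :
    q - p ≤ ℓ * (1 + Real.log (M / τ)) := by
  have hlog : 0 < Real.log (M / τ) := Real.log_pos (by rwa [lt_div_iff₀ hτ, one_mul])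
  set Λ := Real.log (M / τ) with hΛ
  set s := 1 / (1 + Λ) with hs
  have hs0 : 0 < s := by positivity
  have hs1 : s < 1 := by rw [hs, div_lt_one (by positivity)]; linarith
  have key : ∀ p, τ < w p → M / 4 < w ((1 - s) * y + s * p) := by
    intro p hp
    refine lt_of_lt_of_le ?_ (h.logconc y p s hs0 hs1)
    have h1 : (0.9 * M) ^ (1 - s) * τ ^ s ≤ w y ^ (1 - s) * w p ^ s := by
      have : 0 ≤ 1 - s := by linarith
      have := h.nonneg y
      gcongr
    refine lt_of_lt_of_le ?_ h1
    have h2 : τ ^ s = M ^ s * Real.exp (-(s * Λ)) := by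
      have : τ = M * Real.exp (-Λ) := by
        rw [Real.exp_neg, hΛ, Real.exp_log (by positivity)]; field_simp
      conv_lhs => rw [this]
      rw [Real.mul_rpow hM.le (Real.exp_pos _).le, ← Real.exp_mul]
      ring_nf
    have h3 : (0.9 : ℝ) ≤ 0.9 ^ (1 - s) := by
      conv_lhs => rw [← Real.rpow_one 0.9]
      exact Real.rpow_le_rpow_of_exponent_ge (by norm_num) (by norm_num) (by linarith)
    have h4 : Real.exp (-1) ≤ Real.exp (-(s * Λ)) := by
      apply Real.exp_le_exp.2
      have : s * Λ ≤ 1 := by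
        rw [hs, one_div_mul_eq_div, div_le_one (by positivity)]; linarith
      linarith
    have h5 : M ^ (1 - s) * M ^ s = M := by
      rw [← Real.rpow_add hM]; simp
    have h6 : (0.3 : ℝ) < Real.exp (-1) := by
      have := Real.exp_neg_one_gt_d9; linarith
    rw [h2, Real.mul_rpow (by norm_num) hM.le]
    calc M / 4 < 0.9 * M * Real.exp (-1) := by nlinarith
      _ = 0.9 * (M ^ (1 - s) * M ^ s) * Real.exp (-1) := by rw [h5]
      _ ≤ 0.9 ^ (1 - s) * (M ^ (1 - s) * M ^ s) * Real.exp (-(s * Λ)) := by gcongr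
      _ = _ := by ring
  have h7 := hℓ _ _ (key p hp) (key q hq)
  have h8 : s * (q - p) ≤ ℓ := by linarith
  rw [hs, one_div_mul_eq_div, div_le_iff₀ (by positivity)] at h8
  exact h8

/-- The support has length at most `2 n` times that of the superlevel set of `M / 4`. The ratio
`r = 1 / (2 n)` is such that `(1 - r) ^ (n - 1) ≥ 1 / 2`. -/
lemma Needle.width_dim {n : ℕ} (hn : 0 < n) {w : ℝ → ℝ} (h : Needle n w) {M ℓ y p q : ℝ}
    (hM : 0 < M)
    (hy : 0.9 * M < w y) (hℓ : ∀ x z, M / 4 < w x → M / 4 < w z → z - x ≤ ℓ)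
    (hp : 0 < w p) (hq : 0 < w q) :
    q - p ≤ ℓ * (2 * n) := by
  have hn' : (1 : ℝ) ≤ n := by exact_mod_cast hn
  set r : ℝ := 1 / (2 * n) with hr
  have hr0 : 0 < r := by positivity
  have hr1 : r ≤ 1 / 2 := by
    rw [hr]; apply one_div_le_one_div_of_le <;> linarith
  have hpow : (1 / 2 : ℝ) ≤ (1 - r) ^ (n - 1) := by
    have h1 := one_add_mul_le_pow (a := -r) (by linarith) (n - 1)
    rw [← sub_eq_add_neg] at h1
    refine le_trans ?_ h1
    rw [Nat.cast_sub hn, hr]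
    push_cast
    have : ((n : ℝ) - 1) * -(1 / (2 * n)) = -(1 / 2) + 1 / (2 * n) := by field_simp; ring
    rw [this]
    have : 0 < 1 / (2 * (n : ℝ)) := by positivity
    linarith
  have key : ∀ p, 0 < w p → M / 4 < w ((1 - r) * y + r * p) := by
    intro p hp
    refine lt_of_lt_of_le ?_ (h.dilate p y r hp hr0.le (by linarith))
    calc M / 4 < 1 / 2 * (0.9 * M) := by linarith
      _ ≤ _ := by gcongr
  have h7 := hℓ _ _ (key p hp) (key q hq)
  have h8 : r * (q - p) ≤ ℓ := by linarith
  rw [hr, one_div_mul_eq_div, div_le_iff₀ (by positivity)] at h8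
  exact h8

/-- This is where the minimum of `d` and `n` comes from: the width `L` is at most `2 n`, and its `d`-th
power is at most `(4 d) ^ d` up to a factor which the logarithmic growth of `L` renders integrable. -/
lemma width_pow {d n : ℕ} (hd : 0 < d) (hn : 0 < n) {L σ : ℝ} (hL0 : 0 ≤ L) (hσ : 0 < σ)
    (hσ1 : σ ≤ 1)
    (hL : L ≤ 1 + Real.log (1 / min σ (1 / 4))) (hLn : L ≤ 2 * n) :
    L ≤ 16 * σ ^ (-(1 / 2) : ℝ) ∧
      L ^ (d + 1) ≤ 16 * (4 * min (d : ℝ) n) ^ d * σ ^ (-(1 / 2) : ℝ) := by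
  set σ' := min σ (1 / 4) with hσ'
  have hσ'0 : 0 < σ' := by positivity
  have hσ'1 : σ' ≤ 1 := (min_le_right _ _).trans (by norm_num)
  set X := σ' ^ (-(1 / 4) : ℝ) with hX
  have hX1 : 1 ≤ X := Real.one_le_rpow_of_pos_of_le_one_of_nonpos hσ'0 hσ'1 (by norm_num)
  have hXsq : X ^ 2 ≤ 2 * σ ^ (-(1 / 2) : ℝ) := by
    have h1 : X ^ 2 = σ' ^ (-(1 / 2) : ℝ) := by
      rw [hX, ← Real.rpow_natCast, ← Real.rpow_mul hσ'0.le]; norm_num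
    have h2 : σ / 4 ≤ σ' := le_min (by linarith) (by linarith)
    rw [h1]
    calc σ' ^ (-(1 / 2) : ℝ) ≤ (σ / 4) ^ (-(1 / 2) : ℝ) :=
          Real.rpow_le_rpow_of_nonpos (by positivity) h2 (by norm_num)
      _ = σ ^ (-(1 / 2) : ℝ) / (4 : ℝ) ^ (-(1 / 2) : ℝ) := Real.div_rpow hσ.le (by norm_num) _
      _ = _ := by
        have : (4 : ℝ) ^ (-(1 / 2) : ℝ) = 1 / 2 := by
          rw [show (4 : ℝ) = 2 ^ (2 : ℝ) by norm_num, ← Real.rpow_mul (by norm_num)]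
          norm_num [Real.rpow_neg_one]
        rw [this]; ring
  have hlogX : Real.log (1 / σ') = 4 * Real.log X := by
    rw [hX, Real.log_rpow hσ'0, one_div, Real.log_inv]; ring
  have hLX : L ≤ 4 * X := by
    have := Real.log_le_sub_one_of_pos (show 0 < X by positivity)
    rw [hlogX] at hL
    linarith
  have hXX : X ≤ X ^ 2 := by nlinarith
  have hd0 : (0 : ℝ) < d := by exact_mod_cast hd
  have hn0 : (0 : ℝ) < n := by exact_mod_cast hn
  refine ⟨by nlinarith, ?_⟩
  rcases le_total (d : ℝ) n with hdn | hdn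
  · rw [min_eq_left hdn]
    have h1 : L ^ d ≤ (4 * d) ^ d * (2 * X) := by
      have h2 : L / (4 * d) ≤ Real.exp (L / (4 * d)) := by
        have := Real.add_one_le_exp (L / (4 * d)); linarith
      have h3 : (L / (4 * d)) ^ d ≤ 2 * X := by
        calc (L / (4 * d)) ^ d ≤ Real.exp (L / (4 * d)) ^ d := by gcongr
          _ = Real.exp (L / 4) := by
            rw [← Real.exp_nat_mul]; congr 1; field_simp
          _ ≤ Real.exp (1 / 4 + Real.log X) := by
            apply Real.exp_le_exp.2; rw [hlogX] at hL; linarith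
          _ = Real.exp (1 / 4) * X := by rw [Real.exp_add, Real.exp_log (by positivity)]
          _ ≤ 2 * X := by
            gcongr
            have : Real.exp (1 / 4) ^ 4 ≤ 2 ^ 4 := by
              rw [← Real.exp_nat_mul]
              have := Real.exp_one_lt_d9
              norm_num
              linarith
            exact le_of_pow_le_pow_left₀ (by norm_num) (by norm_num) this
      calc L ^ d = (4 * d) ^ d * (L / (4 * d)) ^ d := by
            rw [← mul_pow]; congr 1; field_simp
        _ ≤ _ := by gcongr
    calc L ^ (d + 1) = L ^ d * L := pow_succ _ _
      _ ≤ (4 * d) ^ d * (2 * X) * (4 * X) := by gcongr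
      _ = 8 * (4 * d) ^ d * X ^ 2 := by ring
      _ ≤ 8 * (4 * d) ^ d * (2 * σ ^ (-(1 / 2) : ℝ)) := by gcongr
      _ = _ := by ring
  · rw [min_eq_right hdn]
    calc L ^ (d + 1) = L ^ d * L := pow_succ _ _
      _ ≤ (4 * n) ^ d * (4 * X ^ 2) := by gcongr <;> nlinarith
      _ = 4 * (4 * n) ^ d * X ^ 2 := by ring
      _ ≤ 4 * (4 * n) ^ d * (2 * σ ^ (-(1 / 2) : ℝ)) := by gcongr
      _ ≤ _ := by
        have : 0 < (4 * (n : ℝ)) ^ d * σ ^ (-(1 / 2) : ℝ) := by positivity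
        nlinarith

lemma integral_inv_sqrt {M : ℝ} (hM : 0 < M) :
    IntegrableOn (fun τ : ℝ => (τ / M) ^ (-(1 / 2) : ℝ)) (Set.Ioo 0 M) ∧
      ∫ τ in Set.Ioo 0 M, (τ / M) ^ (-(1 / 2) : ℝ) = 2 * M := by
  have hI := (intervalIntegral.intervalIntegrable_rpow' (a := 0) (b := M) (r := (-(1 / 2) : ℝ))
    (by norm_num))
  have e : Set.EqOn (fun τ : ℝ => (τ / M) ^ (-(1 / 2) : ℝ))
      (fun τ : ℝ => τ ^ (-(1 / 2) : ℝ) / M ^ (-(1 / 2) : ℝ)) (Set.Ioo 0 M) := fun τ hτ =>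
    Real.div_rpow hτ.1.le hM.le _
  constructor
  · rw [integrableOn_congr_fun e measurableSet_Ioo]
    rw [intervalIntegrable_iff_integrableOn_Ioo_of_le hM.le] at hI
    exact hI.div_const _
  · rw [setIntegral_congr_fun measurableSet_Ioo e, ← integral_Ioc_eq_integral_Ioo,
      ← intervalIntegral.integral_of_le hM.le, intervalIntegral.integral_div,
      integral_rpow (Or.inl (by norm_num)), Real.zero_rpow (by norm_num)]
    have : M ^ (-(1 / 2) + 1 : ℝ) = M * M ^ (-(1 / 2) : ℝ) := by
      rw [Real.rpow_add hM, Real.rpow_one, mul_comm]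
    rw [this]
    have : 0 < M ^ (-(1 / 2) : ℝ) := by positivity
    field_simp
    norm_num

/-- Integration against a needle reduces to integration over its superlevel sets, because `σ ^ (-1/2)`
has integral `2` over `(0, 1)`. -/
lemma layer_cake_bound {n : ℕ} {w : ℝ → ℝ} (h : Needle n w) {M Q : ℝ} (hM : 0 < M)
    (hwM : ∀ x, w x ≤ M) {φ : ℝ → ℂ} (hφ : Continuous φ)
    (hQ : ∀ τ, 0 < τ → τ < M → ‖∫ x in {x | τ < w x}, φ x‖ ≤ Q * (τ / M) ^ (-(1 / 2) : ℝ)) :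
    ‖∫ x, φ x * (w x : ℂ)‖ ≤ Q * (2 * M) := by
  have hms : MeasurableSet {z : ℝ × ℝ | z.2 < w z.1} :=
    measurableSet_lt measurable_snd (h.meas.comp measurable_fst)
  set Φ : ℝ → ℝ → ℂ := fun x τ => {z : ℝ × ℝ | z.2 < w z.1}.indicator (fun z => φ z.1) (x, τ) with hΦ
  have hint : Integrable (Function.uncurry Φ)
      ((volume.restrict (Set.Icc (0 : ℝ) 1)).prod (volume.restrict (Set.Ioo 0 M))) := by
    have h1 : Integrable (fun z : ℝ × ℝ => φ z.1)
        ((volume.restrict (Set.Icc (0 : ℝ) 1)).prod (volume.restrict (Set.Ioo 0 M))) :=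
      Integrable.comp_fst (hφ.integrableOn_Icc) _
    exact h1.indicator hms
  have hswap := integral_integral_swap hint
  have hin : ∀ x, ∫ τ in Set.Ioo 0 M, Φ x τ = φ x * (w x : ℂ) := by
    intro x
    have : ∀ τ, Φ x τ = (Set.Iio (w x)).indicator (fun _ => φ x) τ := by
      intro τ; simp only [hΦ, Set.indicator]; simp
    simp only [this]
    rw [setIntegral_indicator measurableSet_Iio]
    have e : Set.Ioo 0 M ∩ Set.Iio (w x) = Set.Ioo 0 (w x) := by
      ext τ; simp only [Set.mem_inter_iff, Set.mem_Ioo, Set.mem_Iio]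
      constructor
      · rintro ⟨⟨a, _⟩, c⟩; exact ⟨a, c⟩
      · rintro ⟨a, c⟩; exact ⟨⟨a, c.trans_le (hwM x)⟩, c⟩
    rw [e, setIntegral_const, Real.volume_real_Ioo_of_le (h.nonneg x), sub_zero,
      Complex.real_smul, mul_comm]
  have hout : ∀ τ ∈ Set.Ioo 0 M, ∫ x in Set.Icc (0 : ℝ) 1, Φ x τ = ∫ x in {x | τ < w x}, φ x := by
    intro τ hτ
    have : ∀ x, Φ x τ = {x | τ < w x}.indicator φ x := by
      intro x; simp only [hΦ, Set.indicator]; simp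
    simp only [this]
    rw [setIntegral_indicator (measurableSet_lt measurable_const h.meas)]
    congr 2
    rw [Set.inter_eq_right]
    intro x hx
    by_contra hx'
    have h1 : τ < w x := hx
    rw [h.supp x hx'] at h1
    exact absurd hτ.1 h1.not_gt
  have hfull : ∫ x, φ x * (w x : ℂ) = ∫ x in Set.Icc (0 : ℝ) 1, φ x * (w x : ℂ) := by
    rw [setIntegral_eq_integral_of_forall_compl_eq_zero]
    intro x hx
    rw [h.supp x hx]; simp
  simp only [hin] at hswap
  rw [hfull, hswap, setIntegral_congr_fun measurableSet_Ioo hout]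
  obtain ⟨hi, he⟩ := integral_inv_sqrt hM
  calc _ ≤ ∫ τ in Set.Ioo 0 M, Q * (τ / M) ^ (-(1 / 2) : ℝ) := by
        apply norm_integral_le_of_norm_le (hi.const_mul Q)
        filter_upwards [ae_restrict_mem measurableSet_Ioo] with τ hτ using hQ τ hτ.1 hτ.2
    _ = _ := by rw [integral_const_mul, he]

/-! ### Superlevel sets of a needle -/

lemma Needle.ordConnected {n : ℕ} {w : ℝ → ℝ} (h : Needle n w) {τ : ℝ} (hτ : 0 < τ) :
    Set.OrdConnected {x | τ < w x} := by
  refine ⟨fun x hx y hy z hz => ?_⟩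
  have hx' : τ < w x := hx
  have hy' : τ < w y := hy
  rcases hz.1.eq_or_lt with rfl | h1
  · exact hx
  rcases hz.2.eq_or_lt with rfl | h2
  · exact hy
  have hxy : 0 < y - x := by linarith
  set s := (z - x) / (y - x) with hs
  have hs0 : 0 < s := div_pos (by linarith) hxy
  have hs1 : s < 1 := by rw [hs, div_lt_one hxy]; linarith
  have he : (1 - s) * x + s * y = z := by rw [hs]; field_simp; ring
  have hl := h.logconc x y s hs0 hs1
  rw [he] at hl
  refine lt_of_lt_of_le ?_ hl
  calc τ = τ ^ (1 - s) * τ ^ s := by rw [← Real.rpow_add hτ]; simp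
    _ < w x ^ (1 - s) * w y ^ s := by
      have h3 : τ ^ (1 - s) < w x ^ (1 - s) := Real.rpow_lt_rpow hτ.le hx' (by linarith)
      have h4 : τ ^ s < w y ^ s := Real.rpow_lt_rpow hτ.le hy' hs0
      have := Real.rpow_pos_of_pos hτ s
      have := Real.rpow_pos_of_pos (hτ.trans hx') (1 - s)
      exact mul_lt_mul'' h3 h4 (by positivity) (by positivity)

lemma Needle.superlevel_sub {n : ℕ} {w : ℝ → ℝ} (h : Needle n w) {τ : ℝ} (hτ : 0 < τ) :
    {x | τ < w x} ⊆ Set.Icc 0 1 := by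
  intro x hx
  by_contra hx'
  have h1 : τ < w x := hx
  rw [h.supp x hx'] at h1
  exact absurd hτ h1.not_gt

lemma setIntegral_ordConnected {I : Set ℝ} (hI : I.OrdConnected) (hne : I.Nonempty)
    (hb : BddBelow I) (ha : BddAbove I) (φ : ℝ → ℂ) :
    ∫ x in I, φ x = ∫ x in (sInf I)..(sSup I), φ x := by
  have hle : sInf I ≤ sSup I := Real.sInf_le_sSup I hb ha
  rw [intervalIntegral.integral_of_le hle]
  have hsub : Set.Ioo (sInf I) (sSup I) ⊆ I := by
    intro z hz
    obtain ⟨x, hx, hxz⟩ := exists_lt_of_csInf_lt hne hz.1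
    obtain ⟨y, hy, hzy⟩ := exists_lt_of_lt_csSup hne hz.2
    exact hI.out hx hy ⟨hxz.le, hzy.le⟩
  have hsub' : I ⊆ Set.Icc (sInf I) (sSup I) := fun x hx => ⟨csInf_le hb hx, le_csSup ha hx⟩
  apply setIntegral_congr_set
  have h1 : (Set.Ioo (sInf I) (sSup I) : Set ℝ) =ᵐ[volume] Set.Icc (sInf I) (sSup I) :=
    Ioo_ae_eq_Icc
  have h2 : (Set.Ioo (sInf I) (sSup I) : Set ℝ) =ᵐ[volume] Set.Ioc (sInf I) (sSup I) :=
    Ioo_ae_eq_Ioc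
  have h3 : I =ᵐ[volume] Set.Icc (sInf I) (sSup I) :=
    (hsub'.eventuallyLE).antisymm (h1.symm.le.trans hsub.eventuallyLE)
  exact h3.trans (h1.symm.trans h2)

lemma sSup_sub_sInf_le {I : Set ℝ} (hne : I.Nonempty) {K : ℝ}
    (h : ∀ p ∈ I, ∀ q ∈ I, q - p ≤ K) : sSup I - sInf I ≤ K := by
  have h1 : sSup I - K ≤ sInf I := by
    refine le_csInf hne fun p hp => ?_
    have : sSup I ≤ p + K := csSup_le hne fun q hq => by linarith [h p hp q hq]
    linarith
  linarith

lemma Needle.integrable {n : ℕ} {w : ℝ → ℝ} (h : Needle n w) : Integrable w :=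
  .of_integral_ne_zero (by rw [h.int_one]; norm_num)

lemma Needle.integrable_mul {n : ℕ} {w : ℝ → ℝ} (h : Needle n w) {ψ : ℝ → ℝ} (hψ : Continuous ψ) :
    Integrable (fun x => ψ x * w x) := by
  obtain ⟨C, hC⟩ := (isCompact_Icc (a := (0 : ℝ)) (b := 1)).exists_bound_of_continuousOn
    hψ.continuousOn
  have e : (fun x => ψ x * w x) = fun x => (Set.Icc (0 : ℝ) 1).indicator ψ x * w x := by
    ext x
    by_cases hx : x ∈ Set.Icc (0 : ℝ) 1
    · rw [Set.indicator_of_mem hx]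
    · rw [h.supp x hx]; simp
  rw [e]
  refine h.integrable.bdd_mul (c := |C|)
    (hψ.measurable.indicator measurableSet_Icc).aestronglyMeasurable ?_
  refine Filter.Eventually.of_forall fun x => ?_
  by_cases hx : x ∈ Set.Icc (0 : ℝ) 1
  · rw [Set.indicator_of_mem hx]; exact (hC x hx).trans (le_abs_self _)
  · rw [Set.indicator_of_notMem hx]; simp

/-- The geometry of a needle. Its core `[A, B]`, on which `w ≥ M / 4`, has length comparable to `1 / M`.
Each superlevel set is an interval `[a, b]` up to its endpoints, contained, together with the core, in
an interval `[a', b']` whose length relative to the core is controlled. -/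
theorem Needle.core {n d : ℕ} (hn : 0 < n) (hd : 0 < d) {w : ℝ → ℝ} (h : Needle n w) :
    ∃ M y A B : ℝ, 0 < M ∧ (∀ x, w x ≤ M) ∧ A < B ∧ y ∈ Set.Icc A B ∧ (B - A) * M ≤ 4 ∧
      ∀ τ, 0 < τ → τ < M → ∃ a b a' b' : ℝ, a' ≤ a ∧ a ≤ b ∧ b ≤ b' ∧ a' ≤ A ∧ B ≤ b' ∧
        (∀ φ : ℝ → ℂ, ∫ x in {x | τ < w x}, φ x = ∫ x in a..b, φ x) ∧
        (b' - a') / (B - A) ≤ 16 * (τ / M) ^ (-(1 / 2) : ℝ) ∧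
        ((b' - a') / (B - A)) ^ (d + 1) ≤
          16 * (4 * min (d : ℝ) n) ^ d * (τ / M) ^ (-(1 / 2) : ℝ) := by
  obtain ⟨K, hK⟩ := h.bdd
  have hbdd : BddAbove (Set.range w) := ⟨K, by rintro _ ⟨x, rfl⟩; exact hK x⟩
  set M := ⨆ x, w x with hMdef
  have hwM : ∀ x, w x ≤ M := fun x => le_ciSup hbdd x
  have hM : 0 < M := by
    by_contra hM
    have h0 : ∀ x, w x = 0 := fun x => le_antisymm ((hwM x).trans (not_lt.1 hM)) (h.nonneg x)
    have := h.int_one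
    simp [h0] at this
  have hnear : ∀ c < M, ∃ y, c < w y := fun c hc => exists_lt_of_lt_ciSup hc
  obtain ⟨y, hy⟩ := hnear (0.9 * M) (by linarith)
  set J := {x | M / 4 < w x} with hJ
  have hyJ : y ∈ J := show M / 4 < w y by linarith
  have hJsub : J ⊆ Set.Icc 0 1 := h.superlevel_sub (by positivity)
  have hJb : BddBelow J := bddBelow_Icc.mono hJsub
  have hJa : BddAbove J := bddAbove_Icc.mono hJsub
  set A := sInf J with hA
  set B := sSup J with hB
  have hJle : ∀ x z, M / 4 < w x → M / 4 < w z → z - x ≤ B - A := by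
    intro x z hx hz
    have h1 : A ≤ x := csInf_le hJb hx
    have h2 : z ≤ B := le_csSup hJa hz
    linarith
  have hyAB : y ∈ Set.Icc A B := ⟨csInf_le hJb hyJ, le_csSup hJa hyJ⟩
  have hlen : ∀ τ, 0 < τ → τ < M → ∃ a b : ℝ, a ≤ b ∧ b - a ≤ (B - A) * (2 * n) ∧
      b - a ≤ (B - A) * (1 + Real.log (M / τ)) ∧
      (∀ φ : ℝ → ℂ, ∫ x in {x | τ < w x}, φ x = ∫ x in a..b, φ x) ∧
      (a = sInf {x | τ < w x} ∧ b = sSup {x | τ < w x}) := by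
    intro τ h0 hτ
    have hsub := h.superlevel_sub h0
    have hne : {x | τ < w x}.Nonempty := hnear τ hτ
    refine ⟨sInf {x | τ < w x}, sSup {x | τ < w x},
      Real.sInf_le_sSup _ (bddBelow_Icc.mono hsub) (bddAbove_Icc.mono hsub), ?_, ?_, ?_, rfl, rfl⟩
    · exact sSup_sub_sInf_le hne fun p hp q hq =>
        h.width_dim hn hM hy hJle (h0.trans hp) (h0.trans hq)
    · exact sSup_sub_sInf_le hne fun p hp q hq => h.width_log hM hy hJle h0 hτ hp hq
    · exact setIntegral_ordConnected (h.ordConnected h0) hne (bddBelow_Icc.mono hsub)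
        (bddAbove_Icc.mono hsub)
  -- A degenerate core would make all superlevel sets null.
  have hAB : A < B := by
    by_contra hcon
    have hle : A ≤ B := hyAB.1.trans hyAB.2
    have heq : B - A = 0 := by linarith
    have := layer_cake_bound h (Q := 0) hM hwM (φ := fun _ => 1) continuous_const (by
      intro τ h0 hτ
      obtain ⟨a, b, hab, h1, -, h2, -⟩ := hlen τ h0 hτ
      rw [heq, zero_mul] at h1
      have : a = b := by linarith
      rw [h2, this]
      simp)
    simp only [one_mul] at this
    rw [integral_complex_ofReal, h.int_one] at this
    norm_num at this
  refine ⟨M, y, A, B, hM, hwM, hAB, hyAB, ?_, ?_⟩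
  · have hsub : Set.Ioo A B ⊆ J := by
      intro z hz
      obtain ⟨x, hx, hxz⟩ := exists_lt_of_csInf_lt ⟨y, hyJ⟩ hz.1
      obtain ⟨x', hx', hzx⟩ := exists_lt_of_lt_csSup ⟨y, hyJ⟩ hz.2
      exact (h.ordConnected (by positivity)).out hx hx' ⟨hxz.le, hzx.le⟩
    have h1 : ∫ x, (Set.Ioo A B).indicator (fun _ => M / 4) x ≤ ∫ x, w x := by
      refine integral_mono ((integrable_indicator_iff measurableSet_Ioo).2 (by simp)) h.integrable
        fun x => ?_
      by_cases hx : x ∈ Set.Ioo A B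
      · rw [Set.indicator_of_mem hx]; exact le_of_lt (hsub hx)
      · rw [Set.indicator_of_notMem hx]; exact h.nonneg x
    rw [integral_indicator measurableSet_Ioo, setIntegral_const, h.int_one,
      Real.volume_real_Ioo_of_le hAB.le, smul_eq_mul] at h1
    linarith
  · intro τ h0 hτ
    obtain ⟨a, b, hab, -, -, hφ, ha, hb⟩ := hlen τ h0 hτ
    have hτ'0 : 0 < min τ (M / 4) := by positivity
    have hτ'M : min τ (M / 4) < M := (min_le_left _ _).trans_lt hτ
    obtain ⟨a', b', hab', hn', hlog', -, ha', hb'⟩ := hlen (min τ (M / 4)) hτ'0 hτ'M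
    have hs' := h.superlevel_sub hτ'0
    have hs1 : {x | τ < w x} ⊆ {x | min τ (M / 4) < w x} := fun x hx =>
      show min τ (M / 4) < w x from (min_le_left _ _).trans_lt hx
    have hs2 : J ⊆ {x | min τ (M / 4) < w x} := fun x hx =>
      show min τ (M / 4) < w x from (min_le_right _ _).trans_lt hx
    have hne : {x | τ < w x}.Nonempty := hnear τ hτ
    have hℓ : 0 < B - A := by linarith
    have hpow := width_pow (L := (b' - a') / (B - A)) (σ := τ / M) hd hn
      (div_nonneg (by linarith) hℓ.le) (by positivity) (by rw [div_le_one hM]; exact hτ.le)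
      (by
        rw [div_le_iff₀ hℓ]
        have e : min (τ / M) (1 / 4) = min τ (M / 4) / M := by
          rw [← min_div_div_right hM.le]
          congr 1
          field_simp
        rw [e, one_div_div, mul_comm]
        exact hlog')
      (by rw [div_le_iff₀ hℓ, mul_comm]; exact hn')
    refine ⟨a, b, a', b', ?_, hab, ?_, ?_, ?_, hφ, hpow.1, hpow.2⟩
    · rw [ha, ha']; exact csInf_le_csInf (bddBelow_Icc.mono hs') hne hs1
    · rw [hb, hb']; exact csSup_le_csSup (bddAbove_Icc.mono hs') hne hs1
    · rw [ha']; exact csInf_le_csInf (bddBelow_Icc.mono hs') ⟨y, hyJ⟩ hs2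
    · rw [hb']; exact csSup_le_csSup (bddAbove_Icc.mono hs') ⟨y, hyJ⟩ hs2

/-! ### Oscillatory integrals against a needle -/

lemma Amplitude.continuous {W W' H : ℝ → ℝ} (h : Amplitude W W' H) : Continuous W :=
  continuous_iff_continuousAt.2 fun x => (h.deriv x).continuousAt

lemma Amplitude.continuousH {W W' H : ℝ → ℝ} (h : Amplitude W W' H) : Continuous H :=
  (LipschitzWith.of_dist_le_mul (K := 1) fun u v => by
    simpa [Real.dist_eq] using h.lip u v).continuous

/-- Variation of the amplitude along `g` over an interval: at most `8 d` in general. -/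
lemma Amplitude.variation_le {W W' H : ℝ → ℝ} (h : Amplitude W W' H) {d : ℕ} {g : Polynomial ℝ}
    (hg : g.natDegree ≤ d) {a b : ℝ} (hab : a ≤ b) :
    ∫ x in a..b, |W' (g.eval x) * g.derivative.eval x| ≤ d * 8 := by
  have h1 := integral_abs_deriv_mul_le hg hab (β := 1) one_pos
  have hc : Continuous fun x => |g.derivative.eval x| * 1 / (1 ^ 2 + g.eval x ^ 2) :=
    Continuous.div (by fun_prop) (by fun_prop) fun x => by positivity
  have hW := h.cont
  have h2 : ∫ x in a..b, |W' (g.eval x) * g.derivative.eval x| ≤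
      ∫ x in a..b, 2 * (|g.derivative.eval x| * 1 / (1 ^ 2 + g.eval x ^ 2)) := by
    refine intervalIntegral.integral_mono_on hab ?_ ?_ fun x _ => ?_
    · apply Continuous.intervalIntegrable; fun_prop
    · exact (continuous_const.mul hc).intervalIntegrable _ _
    · rw [abs_mul]
      calc |W' (g.eval x)| * |g.derivative.eval x| ≤
            2 / (1 + g.eval x ^ 2) * |g.derivative.eval x| := by gcongr; exact h.dbound _
        _ = _ := by ring
  rw [intervalIntegral.integral_const_mul] at h2
  have := Real.pi_lt_d2
  have hd : (0 : ℝ) ≤ d := by positivity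
  nlinarith

/-- If `g` stays within `O` of a constant, the variation of the amplitude is proportional to `O`. -/
lemma Amplitude.variation_le' {W W' H : ℝ → ℝ} (h : Amplitude W W' H) {d : ℕ} {g : Polynomial ℝ}
    (hg : g.natDegree ≤ d) {a b c O : ℝ} (hab : a ≤ b) (hO : 0 < O)
    (hgO : ∀ x ∈ Set.Icc a b, |g.eval x - c| ≤ O) :
    ∫ x in a..b, |W' (g.eval x) * g.derivative.eval x| ≤ d * (13 * O) := by
  set q := g - Polynomial.C c with hq
  have hqd : q.natDegree ≤ d := by rw [hq, Polynomial.natDegree_sub_C]; exact hg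
  have hq' : q.derivative = g.derivative := by simp [hq]
  have hqe : ∀ x, q.eval x = g.eval x - c := fun x => by simp [hq]
  have h1 := integral_abs_deriv_mul_le hqd hab hO
  have hc : Continuous fun x => |q.derivative.eval x| * O / (O ^ 2 + q.eval x ^ 2) :=
    Continuous.div (by fun_prop) (by fun_prop) fun x => by positivity
  have hW := h.cont
  have h2 : ∫ x in a..b, |W' (g.eval x) * g.derivative.eval x| ≤
      ∫ x in a..b, (4 * O) * (|q.derivative.eval x| * O / (O ^ 2 + q.eval x ^ 2)) := by
    refine intervalIntegral.integral_mono_on hab ?_ ?_ fun x hx => ?_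
    · apply Continuous.intervalIntegrable; fun_prop
    · exact (continuous_const.mul hc).intervalIntegrable _ _
    · rw [abs_mul, hq']
      have hq2 : q.eval x ^ 2 ≤ O ^ 2 := by
        rw [hqe, ← sq_abs]; gcongr; exact hgO x hx
      have hW2 : |W' (g.eval x)| ≤ 2 := by
        refine (h.dbound _).trans ?_
        rw [div_le_iff₀ (by positivity)]
        nlinarith [sq_nonneg (g.eval x)]
      have h3 : 2 ≤ (4 * O) * (O / (O ^ 2 + q.eval x ^ 2)) := by
        rw [mul_div_assoc', le_div_iff₀ (by positivity)]
        nlinarith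
      calc |W' (g.eval x)| * |g.derivative.eval x| ≤
            ((4 * O) * (O / (O ^ 2 + q.eval x ^ 2))) * |g.derivative.eval x| := by
              gcongr; exact hW2.trans h3
        _ = _ := by ring
  rw [intervalIntegral.integral_const_mul] at h2
  have hpi := Real.pi_lt_d2
  have hd : (0 : ℝ) ≤ d := by positivity
  calc _ ≤ 4 * O * (Real.pi * d) := h2.trans (by gcongr)
    _ ≤ 4 * O * (3.15 * d) := by gcongr
    _ ≤ _ := by nlinarith [mul_nonneg hd hO.le]

set_option maxHeartbeats 2000000 in
/-- The one-dimensional bound. Let `S` be the oscillation of `g` on the core of the needle and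
`a₀ = (128 min(d,n)) ^ d S`, which bounds the first moment of `g - c` up to a constant. If `a₀ ≤ ε`,
then `H ∘ g`, hence `W ∘ g`, is of size `ε`. Otherwise `|W ∘ g|` is on average of order `min(1, a₀)`, its variation
at most of order `d` times that, and the oscillatory integral supplies the factor
`(|t| S) ^ (-1/d) = 128 min(d,n) (|t| a₀) ^ (-1/d)`, while `min(1, a₀) a₀ ^ (-1/d) ≤ 1`. -/
theorem needle_bound {n d : ℕ} (hn : 0 < n) (hd : 0 < d) {w : ℝ → ℝ} (h : Needle n w)
    {g : Polynomial ℝ} (hg : g.natDegree ≤ d) {W W' H : ℝ → ℝ} (hA : Amplitude W W' H) {t : ℝ}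
    (ht : t ≠ 0) {ε : ℝ} (hε : |∫ x, H (g.eval x) * w x| ≤ ε) :
    ‖∫ x, (osc t g x * (W (g.eval x) : ℂ)) * (w x : ℂ)‖ ≤
      max (1000 * ε) (10 ^ 9 * min (d : ℝ) n * |t| ^ (-(1 / (d : ℝ)))) := by
  obtain ⟨M, y, A, B, hM, hwM, hAB, hy, hlM, hτ⟩ := h.core hn hd
  have hε0 : 0 ≤ ε := (abs_nonneg _).trans hε
  set ℓ := B - A with hℓdef
  have hℓ : 0 < ℓ := by rw [hℓdef]; linarith
  set c := g.eval y with hc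
  have hdR : (0 : ℝ) < d := by exact_mod_cast hd
  have hnR : (0 : ℝ) < n := by exact_mod_cast hn
  set D := min (d : ℝ) n with hD
  have hDp : 0 < D := by positivity
  have hWc := hA.continuous
  have hHc := hA.continuousH
  have hoc := continuous_osc t g
  obtain ⟨x₀, hx₀, hmax⟩ := (isCompact_Icc (a := A) (b := B)).exists_isMaxOn ⟨y, hy⟩
    (f := fun x => |g.eval x - c|) (by fun_prop)
  set S := |g.eval x₀ - c| with hS
  have hS0 : 0 ≤ S := abs_nonneg _
  have hmax' : ∀ x ∈ Set.Icc A B, |g.eval x - c| ≤ S := fun x hx => hmax hx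
  -- The Remez inequality controls the oscillation of `g` on larger intervals.
  have hgrow : ∀ a' b', a' ≤ A → B ≤ b' → ∀ x ∈ Set.Icc a' b',
      |g.eval x - c| ≤ S * (32 * ((b' - a') / ℓ)) ^ d := by
    intro a' b' ha hb x hx
    have := remez (m := d) (q := g - Polynomial.C c)
      (by rw [Polynomial.natDegree_sub_C]; exact hg) (isClosed_Icc (a := A) (b := B))
      (Set.Icc_subset_Icc ha hb) (by rw [Real.volume_real_Icc_of_le hAB.le]; exact hℓ)
      (β := S) (fun x hx => by simpa using hmax' x hx) hx
    rw [Real.volume_real_Icc_of_le hAB.le, mul_div_assoc] at this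
    simpa using this
  set a₀ := (128 * D) ^ d * S with ha₀
  have ha₀0 : 0 ≤ a₀ := by positivity
  have hOL : ∀ L σ : ℝ, L ^ (d + 1) ≤ 16 * (4 * D) ^ d * σ →
      S * (32 * L) ^ d * L ≤ 16 * a₀ * σ := by
    intro L σ hL
    calc S * (32 * L) ^ d * L = S * 32 ^ d * L ^ (d + 1) := by rw [mul_pow]; ring
      _ ≤ S * 32 ^ d * (16 * (4 * D) ^ d * σ) := by gcongr
      _ = 16 * ((32 * (4 * D)) ^ d * S) * σ := by rw [mul_pow 32]; ring
      _ = _ := by rw [ha₀]; ring_nf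
  -- The first absolute moment of `g - c`.
  have hE : ∫ x, |g.eval x - c| * w x ≤ 128 * a₀ := by
    have := layer_cake_bound h (Q := 16 * a₀ * ℓ) hM hwM
      (φ := fun x => ((|g.eval x - c| : ℝ) : ℂ)) (by fun_prop) (by
        intro τ h0 h1
        obtain ⟨a, b, a', b', haa, hab, hbb, haA, hbB, hφ, hL1, hL2⟩ := hτ τ h0 h1
        rw [hφ]
        set L := (b' - a') / ℓ with hLdef
        have hL0 : 0 ≤ L := div_nonneg (by linarith) hℓ.le
        have h2 : ‖∫ x in a..b, ((|g.eval x - c| : ℝ) : ℂ)‖ ≤ S * (32 * L) ^ d * |b - a| := by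
          apply intervalIntegral.norm_integral_le_of_norm_le_const
          intro x hx
          rw [Set.uIoc_of_le hab] at hx
          rw [Complex.norm_real, Real.norm_eq_abs, abs_abs]
          exact hgrow a' b' haA hbB x ⟨haa.trans hx.1.le, hx.2.trans hbb⟩
        calc _ ≤ S * (32 * L) ^ d * |b - a| := h2
          _ ≤ S * (32 * L) ^ d * (L * ℓ) := by
            gcongr
            rw [abs_of_nonneg (by linarith), hLdef, div_mul_cancel₀ _ hℓ.ne']; linarith
          _ = S * (32 * L) ^ d * L * ℓ := by ring
          _ ≤ 16 * a₀ * (τ / M) ^ (-(1 / 2) : ℝ) * ℓ :=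
            mul_le_mul_of_nonneg_right (hOL _ _ hL2) hℓ.le
          _ = _ := by ring)
    have e : ∫ x, ((|g.eval x - c| : ℝ) : ℂ) * (w x : ℂ) =
        ((∫ x, |g.eval x - c| * w x : ℝ) : ℂ) := by
      rw [← integral_complex_ofReal]; simp
    rw [e, Complex.norm_real, Real.norm_eq_abs] at this
    have h3 := (le_abs_self _).trans this
    refine h3.trans ?_
    calc 16 * a₀ * ℓ * (2 * M) = 32 * a₀ * (ℓ * M) := by ring
      _ ≤ 32 * a₀ * 4 := by gcongr
      _ = _ := by ring
  have hHlip : ∫ x, |H (g.eval x) - H c| * w x ≤ 128 * a₀ := by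
    refine le_trans ?_ hE
    refine integral_mono (h.integrable_mul (by fun_prop)) (h.integrable_mul (by fun_prop)) fun x => ?_
    exact mul_le_mul_of_nonneg_right (hA.lip _ _) (h.nonneg x)
  have hHc_le : |H c| ≤ ε + 128 * a₀ := by
    have e : H c = (∫ x, H (g.eval x) * w x) - ∫ x, (H (g.eval x) - H c) * w x := by
      rw [← integral_sub (h.integrable_mul (by fun_prop)) (h.integrable_mul (by fun_prop))]
      have : ∀ x, H (g.eval x) * w x - (H (g.eval x) - H c) * w x = H c * w x := fun x => by ring
      simp only [this]
      rw [integral_const_mul, h.int_one, mul_one]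
    rw [e]
    refine (abs_sub _ _).trans (add_le_add hε ?_)
    refine (abs_integral_le_integral_abs).trans (le_trans (le_of_eq ?_) hHlip)
    congr 1; ext x; rw [abs_mul, abs_of_nonneg (h.nonneg x)]
  have hWle : |W c| ≤ 2 * (ε + 128 * a₀) := (hA.le c).trans (by gcongr)
  -- Either `g` is almost constant and `W ∘ g` is small, or the phase oscillates.
  rcases le_or_gt a₀ ε with hcase | hcase
  · apply le_max_of_le_left
    have hb : ‖∫ x, (osc t g x * (W (g.eval x) : ℂ)) * (w x : ℂ)‖ ≤
        ∫ x, (2 * |H c| + 2 * |H (g.eval x) - H c|) * w x := by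
      apply norm_integral_le_of_norm_le (h.integrable_mul (by fun_prop))
      refine Filter.Eventually.of_forall fun x => ?_
      rw [norm_mul, norm_mul, norm_osc, one_mul, Complex.norm_real, Complex.norm_real,
        Real.norm_eq_abs, Real.norm_eq_abs, abs_of_nonneg (h.nonneg x)]
      refine mul_le_mul_of_nonneg_right ?_ (h.nonneg x)
      have h1 := hA.le (g.eval x)
      have h2 := abs_sub_abs_le_abs_sub (H (g.eval x)) (H c)
      linarith
    have e : ∫ x, (2 * |H c| + 2 * |H (g.eval x) - H c|) * w x =
        2 * |H c| + 2 * ∫ x, |H (g.eval x) - H c| * w x := by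
      have e1 : ∀ x, (2 * |H c| + 2 * |H (g.eval x) - H c|) * w x =
        (2 * |H c|) * w x + 2 * (|H (g.eval x) - H c| * w x) := fun x => by ring
      simp only [e1]
      rw [integral_add (h.integrable.const_mul _)
        ((h.integrable_mul (ψ := fun x => |H (g.eval x) - H c|) (by fun_prop)).const_mul _),
        integral_const_mul, integral_const_mul, h.int_one, mul_one]
    rw [e] at hb
    linarith
  · apply le_max_of_le_right
    have ha₀p : 0 < a₀ := hε0.trans_lt hcase
    have hSp : 0 < S := by
      by_contra hS'
      have : S = 0 := le_antisymm (not_lt.1 hS') hS0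
      rw [ha₀, this, mul_zero] at ha₀p
      exact lt_irrefl _ ha₀p
    set R := (|t| * S) ^ (-(1 / (d : ℝ))) with hR
    have htp : 0 < |t| := abs_pos.2 ht
    have hR0 : 0 ≤ R := by positivity
    have hVd : ∀ x, HasDerivAt (fun x => W (g.eval x)) (W' (g.eval x) * g.derivative.eval x) x :=
      fun x => (hA.deriv _).comp x (g.hasDerivAt x)
    have hV'c : Continuous fun x => W' (g.eval x) * g.derivative.eval x := by
      have := hA.cont
      fun_prop
    have hmain : ‖∫ x, (osc t g x * (W (g.eval x) : ℂ)) * (w x : ℂ)‖ ≤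
        (133 * 4400 * min 1 a₀ * ℓ * R) * (2 * M) := by
      apply layer_cake_bound h hM hwM (by fun_prop)
      intro τ h0 h1
      obtain ⟨a, b, a', b', haa, hab, hbb, haA, hbB, hφ, hL1, hL2⟩ := hτ τ h0 h1
      rw [hφ]
      set L := (b' - a') / ℓ with hLdef
      set σ := (τ / M) ^ (-(1 / 2) : ℝ) with hσ
      have hσ0 : 0 ≤ σ := by positivity
      have hL0 : 0 < L := div_pos (by linarith) hℓ
      have hLℓ : b' - a' = L * ℓ := by rw [hLdef, div_mul_cancel₀ _ hℓ.ne']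
      have hsep : ∃ x ∈ Set.Icc a' b', ∃ z ∈ Set.Icc a' b', S ≤ |g.eval x - g.eval z| :=
        ⟨x₀, ⟨haA.trans hx₀.1, hx₀.2.trans hbB⟩, y, ⟨haA.trans hy.1, hy.2.trans hbB⟩, le_rfl⟩
      have hab' : a' ≤ b' := by linarith
      rcases le_total 1 a₀ with h1a | h1a
      · rw [min_eq_left h1a]
        have := interval_bound (N := 8) hd hg haa hab hbb hSp ht hsep hVd hV'c
          (fun x _ => (hA.bound _).trans (by norm_num)) (hA.variation_le hg hab')
        rw [hLℓ] at this
        refine this.trans ?_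
        calc 133 * 8 * (L * ℓ) * R ≤ 133 * 8 * ((16 * σ) * ℓ) * R := by gcongr
          _ = 133 * 128 * (σ * ℓ * R) := by ring
          _ ≤ 133 * 4400 * (σ * ℓ * R) := by
            have : 0 ≤ σ * ℓ * R := by positivity
            linarith
          _ = _ := by ring
      · rw [min_eq_right h1a]
        set O := S * (32 * L) ^ d with hO
        have hO0 : 0 < O := by positivity
        have hgO := hgrow a' b' haA hbB
        have := interval_bound (N := |W c| + 13 * O) hd hg haa hab hbb hSp ht hsep hVd hV'c
          (fun x hx => by
            have h2 := hA.lipW (g.eval x) c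
            have h3 := hgO x hx
            have h4 := abs_sub_abs_le_abs_sub (W (g.eval x)) (W c)
            linarith)
          ((hA.variation_le' hg hab' hO0 hgO).trans (by
            gcongr
            linarith [abs_nonneg (W c)]))
        rw [hLℓ] at this
        refine this.trans ?_
        have hW' : |W c| ≤ 258 * a₀ := by linarith
        have h5 : (|W c| + 13 * O) * L ≤ 4400 * a₀ * σ := by
          have h6 : |W c| * L ≤ 258 * a₀ * (16 * σ) := by gcongr
          have h7 : O * L ≤ 16 * a₀ * σ := hOL _ _ hL2
          have h8 : 0 ≤ a₀ * σ := by positivity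
          calc (|W c| + 13 * O) * L = |W c| * L + 13 * (O * L) := by ring
            _ ≤ 258 * a₀ * (16 * σ) + 13 * (16 * a₀ * σ) := by linarith
            _ = 4336 * (a₀ * σ) := by ring
            _ ≤ 4400 * (a₀ * σ) := by linarith
            _ = _ := by ring
        calc 133 * (|W c| + 13 * O) * (L * ℓ) * R = 133 * ((|W c| + 13 * O) * L) * ℓ * R := by ring
          _ ≤ 133 * (4400 * a₀ * σ) * ℓ * R := by gcongr
          _ = _ := by ring
    refine hmain.trans ?_
    -- The factor `min(d,n)` is the `d`-th root of the ratio of `a₀` to `S`.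
    have hRR : R = 128 * D * a₀ ^ (-(1 / (d : ℝ))) * |t| ^ (-(1 / (d : ℝ))) := by
      rw [hR, ha₀, Real.mul_rpow (by positivity) hS0, Real.mul_rpow (by positivity) hS0,
        ← Real.rpow_natCast, ← Real.rpow_mul (by positivity)]
      have : (d : ℝ) * -(1 / d) = -1 := by field_simp
      rw [this, Real.rpow_neg_one]
      field_simp
    have hmin : min 1 a₀ * a₀ ^ (-(1 / (d : ℝ))) ≤ 1 := by
      have h1d : 1 / (d : ℝ) ≤ 1 := by
        rw [div_le_one hdR]; exact_mod_cast hd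
      rcases le_total 1 a₀ with h1a | h1a
      · rw [min_eq_left h1a, one_mul]
        apply Real.rpow_le_one_of_one_le_of_nonpos h1a
        have : 0 < 1 / (d : ℝ) := by positivity
        linarith
      · rw [min_eq_right h1a]
        calc a₀ * a₀ ^ (-(1 / (d : ℝ))) = a₀ ^ (1 + -(1 / (d : ℝ))) := by
              rw [Real.rpow_add ha₀p, Real.rpow_one]
          _ ≤ 1 := Real.rpow_le_one ha₀0 h1a (by linarith)
    calc (133 * 4400 * min 1 a₀ * ℓ * R) * (2 * M)
        = 133 * 4400 * 2 * 128 * (ℓ * M) * (min 1 a₀ * a₀ ^ (-(1 / (d : ℝ)))) *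
          (D * |t| ^ (-(1 / (d : ℝ)))) := by rw [hRR]; ring
      _ ≤ 133 * 4400 * 2 * 128 * 4 * 1 * (D * |t| ^ (-(1 / (d : ℝ)))) := by gcongr
      _ ≤ 10 ^ 9 * (D * |t| ^ (-(1 / (d : ℝ)))) := by gcongr; norm_num
      _ = _ := by ring

/-! ### The two amplitudes -/

lemma hasDerivAt_amp (v : ℝ) :
    HasDerivAt (fun v : ℝ => 2 * v / (1 + v ^ 2)) (2 * (1 - v ^ 2) / (1 + v ^ 2) ^ 2) v := by
  have h1 : HasDerivAt (fun v : ℝ => 2 * v) 2 v := by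
    simpa using (hasDerivAt_id v).const_mul (2 : ℝ)
  have h2 : HasDerivAt (fun v : ℝ => 1 + v ^ 2) (2 * v) v := by
    simpa using ((hasDerivAt_pow 2 v).const_add (1 : ℝ))
  refine (h1.div h2 (by positivity)).congr_deriv ?_
  congr 1
  ring

lemma abs_amp_deriv_le (v : ℝ) : |2 * (1 - v ^ 2) / (1 + v ^ 2) ^ 2| ≤ 2 / (1 + v ^ 2) := by
  have h : 0 < 1 + v ^ 2 := by positivity
  rw [abs_div, abs_of_pos (pow_pos h 2), abs_mul, abs_two, div_le_div_iff₀ (by positivity) h]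
  have : |1 - v ^ 2| ≤ 1 + v ^ 2 := by
    rw [abs_le]; constructor <;> nlinarith [sq_nonneg v]
  calc 2 * |1 - v ^ 2| * (1 + v ^ 2) ≤ 2 * (1 + v ^ 2) * (1 + v ^ 2) := by gcongr
    _ = _ := by ring

lemma continuous_amp_deriv : Continuous fun v : ℝ => 2 * (1 - v ^ 2) / (1 + v ^ 2) ^ 2 :=
  Continuous.div (by fun_prop) (by fun_prop) fun v => by positivity

/-- The amplitude `2 v / (1 + v²)`, small when `v` is small. -/
lemma amplitude_one : Amplitude (fun v => 2 * v / (1 + v ^ 2))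
    (fun v => 2 * (1 - v ^ 2) / (1 + v ^ 2) ^ 2) (fun v => v) where
  deriv := hasDerivAt_amp
  cont := continuous_amp_deriv
  bound v := by
    have h : 0 < 1 + v ^ 2 := by positivity
    rw [abs_div, abs_of_pos h, div_le_iff₀ h, abs_mul, abs_two, ← sq_abs]
    nlinarith [sq_nonneg (|v| - 1)]
  dbound := abs_amp_deriv_le
  le v := by
    have h : 0 < 1 + v ^ 2 := by positivity
    rw [abs_div, abs_of_pos h, div_le_iff₀ h, abs_mul, abs_two]
    nlinarith [sq_nonneg v, abs_nonneg v, mul_nonneg (abs_nonneg v) (sq_nonneg v)]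
  lip u v := le_rfl

/-- The complementary amplitude `(1 - v)² / (1 + v²)`, small when the positive part of `v` is
close to `1`. -/
lemma amplitude_two : Amplitude (fun v => 1 - 2 * v / (1 + v ^ 2))
    (fun v => -(2 * (1 - v ^ 2) / (1 + v ^ 2) ^ 2)) (fun v => max v 0 - 1) where
  deriv v := (hasDerivAt_amp v).const_sub 1
  cont := continuous_amp_deriv.neg
  bound v := by
    have h : 0 < 1 + v ^ 2 := by positivity
    have e : 1 - 2 * v / (1 + v ^ 2) = (1 - v) ^ 2 / (1 + v ^ 2) := by field_simp; ring
    rw [e, abs_of_nonneg (by positivity), div_le_iff₀ h]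
    nlinarith [sq_nonneg (1 + v)]
  dbound v := by rw [abs_neg]; exact abs_amp_deriv_le v
  le v := by
    have h : 0 < 1 + v ^ 2 := by positivity
    have e : 1 - 2 * v / (1 + v ^ 2) = (1 - v) ^ 2 / (1 + v ^ 2) := by field_simp; ring
    rw [e, abs_of_nonneg (by positivity), div_le_iff₀ h]
    rcases le_total v 0 with hv | hv
    · rw [max_eq_right hv]
      norm_num
      nlinarith [sq_nonneg (1 + v)]
    · rw [max_eq_left hv, ← sq_abs, abs_sub_comm]
      have h1 : |v - 1| ≤ 2 * (1 + v ^ 2) := by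
        rw [abs_le]; constructor <;> nlinarith [sq_nonneg (v - 1)]
      nlinarith [abs_nonneg (v - 1)]
  lip u v := by
    have := abs_max_sub_max_le_abs u v 0
    simpa using this

/-! ### The Prékopa–Leindler inequality -/

/-- Log-concavity of a nonnegative function on a real vector space, in multiplicative form. -/
def LogConc {E : Type} [AddCommGroup E] [Module ℝ E] (φ : E → ℝ) : Prop :=
  ∀ (x y : E) (s : ℝ), 0 < s → s < 1 → φ x ^ (1 - s) * φ y ^ s ≤ φ ((1 - s) • x + s • y)

/-- One-dimensional Brunn–Minkowski inequality for superlevel sets. -/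
lemma volume_combination_le {A B T : Set ℝ} (hA : A.Nonempty) (hB : B.Nonempty) {R : ℝ}
    (hAR : A ⊆ Set.Icc (-R) R) (hBR : B ⊆ Set.Icc (-R) R) (hT : T.OrdConnected) {s : ℝ}
    (hs0 : 0 < s) (hs1 : s < 1) (hsub : ∀ x ∈ A, ∀ y ∈ B, (1 - s) * x + s * y ∈ T) :
    ENNReal.ofReal (1 - s) * volume A + ENNReal.ofReal s * volume B ≤ volume T := by
  have hAb : BddBelow A := ⟨-R, fun x hx => (hAR hx).1⟩
  have hAa : BddAbove A := ⟨R, fun x hx => (hAR hx).2⟩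
  have hBb : BddBelow B := ⟨-R, fun x hx => (hBR hx).1⟩
  have hBa : BddAbove B := ⟨R, fun x hx => (hBR hx).2⟩
  have vA : volume A ≤ ENNReal.ofReal (sSup A - sInf A) := by
    rw [← Real.volume_Icc]
    exact measure_mono fun x hx => ⟨csInf_le hAb hx, le_csSup hAa hx⟩
  have vB : volume B ≤ ENNReal.ofReal (sSup B - sInf B) := by
    rw [← Real.volume_Icc]
    exact measure_mono fun x hx => ⟨csInf_le hBb hx, le_csSup hBa hx⟩
  have iA : 0 ≤ sSup A - sInf A := by
    obtain ⟨x, hx⟩ := hA; linarith [csInf_le hAb hx, le_csSup hAa hx]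
  have iB : 0 ≤ sSup B - sInf B := by
    obtain ⟨x, hx⟩ := hB; linarith [csInf_le hBb hx, le_csSup hBa hx]
  have h1s : 0 < 1 - s := by linarith
  have hsubT : Set.Ioo ((1 - s) * sInf A + s * sInf B) ((1 - s) * sSup A + s * sSup B) ⊆ T := by
    intro z hz
    have lo : ∃ x ∈ A, ∃ y ∈ B, (1 - s) * x + s * y < z := by
      obtain ⟨x, hx, hx'⟩ := exists_lt_of_csInf_lt hA
        (show sInf A < sInf A + (z - ((1 - s) * sInf A + s * sInf B)) by linarith [hz.1])
      obtain ⟨y, hy, hy'⟩ := exists_lt_of_csInf_lt hB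
        (show sInf B < sInf B + (z - ((1 - s) * sInf A + s * sInf B)) by linarith [hz.1])
      exact ⟨x, hx, y, hy, by nlinarith⟩
    have hi : ∃ x ∈ A, ∃ y ∈ B, z < (1 - s) * x + s * y := by
      obtain ⟨x, hx, hx'⟩ := exists_lt_of_lt_csSup hA
        (show sSup A - ((1 - s) * sSup A + s * sSup B - z) < sSup A by linarith [hz.2])
      obtain ⟨y, hy, hy'⟩ := exists_lt_of_lt_csSup hB
        (show sSup B - ((1 - s) * sSup A + s * sSup B - z) < sSup B by linarith [hz.2])
      exact ⟨x, hx, y, hy, by nlinarith⟩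
    obtain ⟨x, hx, y, hy, hl⟩ := lo
    obtain ⟨x', hx', y', hy', hr⟩ := hi
    exact hT.out (hsub x hx y hy) (hsub x' hx' y' hy') ⟨hl.le, hr.le⟩
  calc _ ≤ ENNReal.ofReal (1 - s) * ENNReal.ofReal (sSup A - sInf A) +
        ENNReal.ofReal s * ENNReal.ofReal (sSup B - sInf B) := by gcongr
    _ = ENNReal.ofReal ((1 - s) * sSup A + s * sSup B - ((1 - s) * sInf A + s * sInf B)) := by
        rw [← ENNReal.ofReal_mul h1s.le, ← ENNReal.ofReal_mul hs0.le,
          ← ENNReal.ofReal_add (by positivity) (by positivity)]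
        congr 1; ring
    _ ≤ volume T := by rw [← Real.volume_Ioo]; exact measure_mono hsubT

/-- The one-dimensional Prékopa–Leindler inequality for functions with supremum `1`. -/
lemma prekopa_unit {f k h : ℝ → ℝ} (hf : Measurable f) (hk : Measurable k) (hf0 : ∀ u, 0 ≤ f u)
    (hk0 : ∀ u, 0 ≤ k u) (hh0 : ∀ u, 0 ≤ h u) (hh : Integrable h) {R : ℝ}
    (hfR : ∀ u, R < |u| → f u = 0) (hkR : ∀ u, R < |u| → k u = 0)
    (hf1 : ∀ u, f u ≤ 1) (hk1 : ∀ u, k u ≤ 1) (hfs : ∀ θ < 1, ∃ u, θ < f u)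
    (hks : ∀ θ < 1, ∃ u, θ < k u) (hoc : ∀ θ, {u | θ < h u}.OrdConnected) {s : ℝ}
    (hs0 : 0 < s) (hs1 : s < 1)
    (hfk : ∀ x y, f x ^ (1 - s) * k y ^ s ≤ h ((1 - s) * x + s * y)) :
    (1 - s) * (∫ u, f u) + s * (∫ u, k u) ≤ ∫ u, h u := by
  have h1s : 0 < 1 - s := by linarith
  have int : ∀ {q : ℝ → ℝ}, Measurable q → (∀ u, 0 ≤ q u) → (∀ u, R < |u| → q u = 0) →
      (∀ u, q u ≤ 1) → Integrable q := by
    intro q hq h0 hR h1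
    have : IntegrableOn q (Set.Icc (-R) R) := by
      refine Measure.integrableOn_of_bounded (M := 1) (by simp) hq.aestronglyMeasurable
        (Filter.Eventually.of_forall fun u => ?_)
      rw [Real.norm_eq_abs, abs_of_nonneg (h0 u)]; exact h1 u
    rw [← integrableOn_univ]
    refine this.of_forall_sdiff_eq_zero MeasurableSet.univ fun u hu => hR u ?_
    by_contra hc
    exact hu.2 (abs_le.1 (not_lt.1 hc))
  have fI := int hf hf0 hfR hf1
  have kI := int hk hk0 hkR hk1
  have key : ENNReal.ofReal (1 - s) * (∫⁻ u, ENNReal.ofReal (f u)) +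
      ENNReal.ofReal s * (∫⁻ u, ENNReal.ofReal (k u)) ≤ ∫⁻ u, ENNReal.ofReal (h u) := by
    rw [lintegral_eq_lintegral_meas_lt volume (Filter.Eventually.of_forall hf0) hf.aemeasurable,
      lintegral_eq_lintegral_meas_lt volume (Filter.Eventually.of_forall hk0) hk.aemeasurable,
      lintegral_eq_lintegral_meas_lt volume (Filter.Eventually.of_forall hh0)
        hh.aestronglyMeasurable.aemeasurable]
    have mf : Measurable fun t : ℝ => volume {a | t < f a} :=
      Antitone.measurable fun a b hab => measure_mono fun x hx => lt_of_le_of_lt hab hx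
    have mk : Measurable fun t : ℝ => volume {a | t < k a} :=
      Antitone.measurable fun a b hab => measure_mono fun x hx => lt_of_le_of_lt hab hx
    rw [← lintegral_const_mul _ mf, ← lintegral_const_mul _ mk,
      ← lintegral_add_left (mf.const_mul _)]
    refine setLIntegral_mono' measurableSet_Ioi fun θ (hθ : 0 < θ) => ?_
    rcases lt_or_ge θ 1 with h1 | h1
    · refine volume_combination_le (hfs θ h1) (hks θ h1) (R := R) ?_ ?_ (hoc θ) hs0 hs1 ?_
      · intro u (hu : θ < f u)
        by_contra hc
        have := hfR u (by rw [← not_le, abs_le]; exact hc)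
        linarith
      · intro u (hu : θ < k u)
        by_contra hc
        have := hkR u (by rw [← not_le, abs_le]; exact hc)
        linarith
      · intro x (hx : θ < f x) y (hy : θ < k y)
        refine lt_of_lt_of_le ?_ (hfk x y)
        calc θ = θ ^ (1 - s) * θ ^ s := by
              rw [← Real.rpow_add hθ, sub_add_cancel, Real.rpow_one]
          _ < f x ^ (1 - s) * k y ^ s := by
              have a1 : θ ^ (1 - s) < f x ^ (1 - s) := Real.rpow_lt_rpow hθ.le hx h1s
              have a2 : θ ^ s < k y ^ s := Real.rpow_lt_rpow hθ.le hy hs0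
              have a3 : 0 < θ ^ (1 - s) := by positivity
              have a4 : 0 < θ ^ s := by positivity
              exact mul_lt_mul'' a1 a2 a3.le a4.le
    · have e1 : {a | θ < f a} = ∅ :=
        Set.eq_empty_of_forall_notMem fun u (hu : θ < f u) => by linarith [hf1 u]
      have e2 : {a | θ < k a} = ∅ :=
        Set.eq_empty_of_forall_notMem fun u (hu : θ < k u) => by linarith [hk1 u]
      rw [e1, e2]
      simp
  rw [← ofReal_integral_eq_lintegral_ofReal fI (Filter.Eventually.of_forall hf0),
    ← ofReal_integral_eq_lintegral_ofReal kI (Filter.Eventually.of_forall hk0),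
    ← ofReal_integral_eq_lintegral_ofReal hh (Filter.Eventually.of_forall hh0),
    ← ENNReal.ofReal_mul h1s.le, ← ENNReal.ofReal_mul hs0.le,
    ← ENNReal.ofReal_add (mul_nonneg h1s.le (integral_nonneg hf0))
      (mul_nonneg hs0.le (integral_nonneg hk0)),
    ENNReal.ofReal_le_ofReal_iff (integral_nonneg hh0)] at key
  exact key

/-- The marginal of a log-concave function in one real variable is log-concave. -/
lemma LogConc.marginal_one {E : Type} [AddCommGroup E] [Module ℝ E] {G : E × ℝ → ℝ}
    (hG : LogConc G) (h0 : ∀ p, 0 ≤ G p) (hm : ∀ x, Measurable fun u => G (x, u)) {B R : ℝ}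
    (hB : ∀ p, G p ≤ B) (hR : ∀ x u, R < |u| → G (x, u) = 0) :
    LogConc fun x => ∫ u, G (x, u) := by
  intro x y s hs0 hs1
  have h1s : 0 < 1 - s := by linarith
  have nn : ∀ x, 0 ≤ ∫ u, G (x, u) := fun x => integral_nonneg fun u => h0 _
  rcases (nn x).eq_or_lt with hx | hx
  · simp only [← hx]
    rw [Real.zero_rpow h1s.ne', zero_mul]; exact nn _
  rcases (nn y).eq_or_lt with hy | hy
  · simp only [← hy]
    rw [Real.zero_rpow hs0.ne', mul_zero]; exact nn _
  have sup : ∀ x, 0 < ∫ u, G (x, u) → ∃ a, 0 < a ∧ (∀ u, G (x, u) ≤ a) ∧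
      ∀ θ < 1, ∃ u, θ < G (x, u) / a := by
    intro x hx
    have hbd : BddAbove (Set.range fun u => G (x, u)) := ⟨B, by rintro _ ⟨u, rfl⟩; exact hB _⟩
    have hle : ∀ u, G (x, u) ≤ sSup (Set.range fun u => G (x, u)) := fun u =>
      le_csSup hbd ⟨u, rfl⟩
    have hpos : 0 < sSup (Set.range fun u => G (x, u)) := by
      by_contra hc
      have : ∀ u, G (x, u) = 0 := fun u => le_antisymm ((hle u).trans (not_lt.1 hc)) (h0 _)
      simp [this] at hx
    refine ⟨_, hpos, hle, fun θ hθ => ?_⟩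
    obtain ⟨_, ⟨u, rfl⟩, hu⟩ := exists_lt_of_lt_csSup (Set.range_nonempty _)
      (show θ * sSup (Set.range fun u => G (x, u)) < sSup (Set.range fun u => G (x, u)) by
        nlinarith)
    exact ⟨u, by rwa [lt_div_iff₀ hpos]⟩
  obtain ⟨a, ha, hfa, hsa⟩ := sup x hx
  obtain ⟨b, hb, hkb, hsb⟩ := sup y hy
  set z := (1 - s) • x + s • y with hz
  set c := a ^ (1 - s) * b ^ s with hc
  have hcp : 0 < c := by positivity
  have hzI : Integrable fun u => G (z, u) := by
    have : IntegrableOn (fun u => G (z, u)) (Set.Icc (-R) R) := by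
      refine Measure.integrableOn_of_bounded (M := B) (by simp) (hm z).aestronglyMeasurable
        (Filter.Eventually.of_forall fun u => ?_)
      rw [Real.norm_eq_abs, abs_of_nonneg (h0 _)]; exact hB _
    rw [← integrableOn_univ]
    refine this.of_forall_sdiff_eq_zero MeasurableSet.univ fun u hu => hR z u ?_
    by_contra hc
    exact hu.2 (abs_le.1 (not_lt.1 hc))
  have key := prekopa_unit (f := fun u => G (x, u) / a) (k := fun u => G (y, u) / b)
    (h := fun u => G (z, u) / c) ((hm x).div_const a) ((hm y).div_const b)
    (fun u => div_nonneg (h0 _) ha.le) (fun u => div_nonneg (h0 _) hb.le)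
    (fun u => div_nonneg (h0 _) hcp.le) (hzI.div_const c) (R := R)
    (fun u hu => by simp [hR x u hu]) (fun u hu => by simp [hR y u hu])
    (fun u => (div_le_one ha).2 (hfa u)) (fun u => (div_le_one hb).2 (hkb u)) hsa hsb ?_ hs0 hs1 ?_
  · simp only [integral_div] at key
    have amgm := Real.geom_mean_le_arith_mean2_weighted h1s.le hs0.le
      (div_nonneg hx.le ha.le) (div_nonneg hy.le hb.le) (by ring)
    have := amgm.trans key
    rw [Real.div_rpow hx.le ha.le, Real.div_rpow hy.le hb.le, div_mul_div_comm, ← hc,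
      div_le_div_iff_of_pos_right hcp] at this
    exact this
  · intro θ
    refine ⟨fun p (hp : θ < G (z, p) / c) q (hq : θ < G (z, q) / c) r hr => ?_⟩
    show θ < G (z, r) / c
    rcases lt_or_ge θ 0 with hθ | hθ
    · exact hθ.trans_le (div_nonneg (h0 _) hcp.le)
    rcases hr.1.eq_or_lt with e | h1
    · rwa [← e]
    rcases hr.2.eq_or_lt with e | h2
    · rwa [e]
    rw [lt_div_iff₀ hcp] at hp hq ⊢
    have hpq : 0 < q - p := by linarith
    set σ := (r - p) / (q - p) with hσ
    have hσ0 : 0 < σ := div_pos (by linarith) hpq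
    have hσ1 : σ < 1 := by rw [hσ, div_lt_one hpq]; linarith
    have := hG (z, p) (z, q) σ hσ0 hσ1
    have e : (1 - σ) • (z, p) + σ • (z, q) = (z, r) := by
      ext1
      · simp [← add_smul]
      · simp only [Prod.smul_mk, Prod.mk_add_mk, smul_eq_mul]
        rw [hσ]; field_simp; ring
    rw [e] at this
    refine lt_of_lt_of_le ?_ this
    have hlt : θ * c < min (G (z, p)) (G (z, q)) := lt_min hp hq
    have hm0 : 0 < min (G (z, p)) (G (z, q)) := lt_of_le_of_lt (by positivity) hlt
    calc θ * c < min (G (z, p)) (G (z, q)) := hlt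
      _ = min (G (z, p)) (G (z, q)) ^ (1 - σ) * min (G (z, p)) (G (z, q)) ^ σ := by
        rw [← Real.rpow_add hm0, sub_add_cancel, Real.rpow_one]
      _ ≤ G (z, p) ^ (1 - σ) * G (z, q) ^ σ := by
        have : 0 ≤ 1 - σ := by linarith
        gcongr
        · exact Real.rpow_nonneg (h0 _) _
        · exact min_le_left _ _
        · exact min_le_right _ _
  · intro u v
    have := hG (x, u) (y, v) s hs0 hs1
    have e : (1 - s) • (x, u) + s • (y, v) = (z, (1 - s) * u + s * v) := by
      simp [hz]
    rw [e] at this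
    show (G (x, u) / a) ^ (1 - s) * (G (y, v) / b) ^ s ≤ G (z, (1 - s) * u + s * v) / c
    rw [Real.div_rpow (h0 _) ha.le, Real.div_rpow (h0 _) hb.le, div_mul_div_comm]
    gcongr

/-- Prékopa's theorem: marginals of bounded, boundedly supported log-concave functions are
log-concave. -/
theorem LogConc.marginal (m : ℕ) : ∀ {E : Type} [AddCommGroup E] [Module ℝ E]
    {F : E × (Fin m → ℝ) → ℝ}, LogConc F → (∀ p, 0 ≤ F p) →
    (∀ x, Measurable fun y => F (x, y)) → ∀ {B R : ℝ}, (∀ p, F p ≤ B) →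
    (∀ x y, R < ‖y‖ → F (x, y) = 0) → LogConc fun x => ∫ y, F (x, y) := by
  induction m with
  | zero =>
    intro E _ _ F hF h0 hm B R hB hR
    have e : ∀ x, ∫ y, F (x, y) = F (x, 0) := by
      intro x
      have : (fun y => F (x, y)) = fun _ => F (x, 0) := by
        ext y; rw [Subsingleton.elim y 0]
      rw [this, integral_const]
      simp [Measure.real, volume_pi]
    simp only [e]
    intro x y s hs0 hs1
    have := hF (x, 0) (y, 0) s hs0 hs1
    simpa using this
  | succ m ih =>
    intro E _ _ F hF h0 hm B R hB hR
    have mp := (volume_preserving_piFinSuccAbove (fun _ : Fin (m + 1) => ℝ) 0).symm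
    have hcons : (⇑(MeasurableEquiv.piFinSuccAbove (fun _ : Fin (m + 1) => ℝ) 0).symm) =
        fun p : ℝ × (Fin m → ℝ) => (Fin.cons p.1 p.2 : Fin (m + 1) → ℝ) := by
      ext1 p
      exact Fin.insertNth_zero' p.1 p.2
    have mcons : Measurable fun p : ℝ × (Fin m → ℝ) => (Fin.cons p.1 p.2 : Fin (m + 1) → ℝ) :=
      hcons ▸ mp.measurable
    have hjm : ∀ x, Measurable fun p : ℝ × (Fin m → ℝ) =>
        F (x, (Fin.cons p.1 p.2 : Fin (m + 1) → ℝ)) := fun x => (hm x).comp mcons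
    have ncons1 : ∀ (u : ℝ) (z : Fin m → ℝ), |u| ≤ ‖(Fin.cons u z : Fin (m + 1) → ℝ)‖ := by
      intro u z
      simpa using norm_le_pi_norm (Fin.cons u z : Fin (m + 1) → ℝ) 0
    have ncons2 : ∀ (u : ℝ) (z : Fin m → ℝ), ‖z‖ ≤ ‖(Fin.cons u z : Fin (m + 1) → ℝ)‖ := by
      intro u z
      rw [pi_norm_le_iff_of_nonneg (norm_nonneg _)]
      intro i
      simpa using norm_le_pi_norm (Fin.cons u z : Fin (m + 1) → ℝ) i.succ
    have hB0 : ∀ x : E, 0 ≤ B := fun x => (h0 (x, 0)).trans (hB _)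
    have fib : ∀ (x : E) (u : ℝ), IntegrableOn
        (fun z : Fin m → ℝ => F (x, (Fin.cons u z : Fin (m + 1) → ℝ))) (Metric.closedBall 0 R) := by
      intro x u
      refine Measure.integrableOn_of_bounded (M := B) ?_ ?_ ?_
      · exact (isCompact_closedBall _ _).measure_lt_top.ne
      · exact ((hjm x).comp measurable_prodMk_left).aestronglyMeasurable
      · refine Filter.Eventually.of_forall fun z => ?_
        rw [Real.norm_eq_abs, abs_of_nonneg (h0 _)]; exact hB _
    have bound : ∀ (x : E) (u : ℝ),
        ∫ z : Fin m → ℝ, F (x, (Fin.cons u z : Fin (m + 1) → ℝ)) ≤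
          B * volume.real (Metric.closedBall (0 : Fin m → ℝ) R) := by
      intro x u
      rw [← setIntegral_eq_integral_of_forall_compl_eq_zero (s := Metric.closedBall 0 R)]
      · calc _ ≤ ∫ z in Metric.closedBall (0 : Fin m → ℝ) R, B := by
              refine setIntegral_mono (fib x u) ?_ fun z => hB _
              exact integrableOn_const (isCompact_closedBall _ _).measure_lt_top.ne
          _ = _ := by simp [mul_comm]
      · intro z hz
        refine hR _ _ (lt_of_lt_of_le ?_ (ncons2 u z))
        simpa using hz
    have key := ih (E := E × ℝ)
      (F := fun q => F (q.1.1, (Fin.cons q.1.2 q.2 : Fin (m + 1) → ℝ))) ?_ (fun _ => h0 _)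
      (fun x => (hjm x.1).comp (measurable_prodMk_left (x := x.2))) (B := B) (R := R) (fun _ => hB _)
      (fun x z hz => hR _ _ (hz.trans_le (ncons2 _ _)))
    · have key2 := LogConc.marginal_one key (fun p => integral_nonneg fun _ => h0 _)
        (fun x => by
          have := StronglyMeasurable.integral_prod_right (ν := (volume : Measure (Fin m → ℝ)))
            (f := fun (u : ℝ) (z : Fin m → ℝ) => F (x, (Fin.cons u z : Fin (m + 1) → ℝ)))
            (hjm x).stronglyMeasurable
          exact this.measurable) (R := R) (fun p => bound p.1 p.2) (fun x u hu => by
          have : ∀ z : Fin m → ℝ, F (x, (Fin.cons u z : Fin (m + 1) → ℝ)) = 0 := fun z =>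
            hR _ _ (hu.trans_le (ncons1 _ _))
          simp [this])
      convert key2 using 2 with x
      rw [← mp.integral_comp' (g := fun y => F (x, y)), Measure.volume_eq_prod]
      have hI : Integrable (fun p : ℝ × (Fin m → ℝ) =>
          F (x, (Fin.cons p.1 p.2 : Fin (m + 1) → ℝ))) (volume.prod volume) := by
        have : IntegrableOn (fun p : ℝ × (Fin m → ℝ) =>
          F (x, (Fin.cons p.1 p.2 : Fin (m + 1) → ℝ)))
            (Set.Icc (-R) R ×ˢ Metric.closedBall 0 R) (volume.prod volume) := by
          refine Measure.integrableOn_of_bounded (M := B) ?_ (hjm x).aestronglyMeasurable ?_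
          · rw [Measure.prod_prod]
            exact ENNReal.mul_ne_top (by simp) (isCompact_closedBall _ _).measure_lt_top.ne
          · refine Filter.Eventually.of_forall fun z => ?_
            rw [Real.norm_eq_abs, abs_of_nonneg (h0 _)]; exact hB _
        rw [← integrableOn_univ]
        refine this.of_forall_sdiff_eq_zero MeasurableSet.univ fun p hp => ?_
        by_contra hne
        refine hp.2 ⟨?_, ?_⟩
        · by_contra hc
          refine hne (hR _ _ (lt_of_lt_of_le ?_ (ncons1 _ _)))
          rw [← not_le, abs_le]; exact hc
        · by_contra hc
          refine hne (hR _ _ (lt_of_lt_of_le ?_ (ncons2 _ _)))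
          simpa using hc
      rw [← integral_prod _ hI, hcons]
    · intro p q s hs0 hs1
      have := hF (p.1.1, (Fin.cons p.1.2 p.2 : Fin (m + 1) → ℝ))
        (q.1.1, (Fin.cons q.1.2 q.2 : Fin (m + 1) → ℝ)) s hs0 hs1
      have e : (1 - s) • (p.1.1, (Fin.cons p.1.2 p.2 : Fin (m + 1) → ℝ)) +
          s • (q.1.1, (Fin.cons q.1.2 q.2 : Fin (m + 1) → ℝ)) =
          (((1 - s) • p + s • q).1.1, (Fin.cons ((1 - s) • p + s • q).1.2
            ((1 - s) • p + s • q).2 : Fin (m + 1) → ℝ)) := by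
        refine Prod.ext rfl (funext fun i => ?_)
        refine Fin.cases ?_ (fun j => ?_) i <;> simp
      rwa [e] at this

/-! ### Marginals of convex bodies -/

/-- The section of `K` at height `t` in the coordinate `a`. -/
def slice {m : ℕ} (K : Set (Fin (m + 1) → ℝ)) (a : Fin (m + 1)) (t : ℝ) : Set (Fin m → ℝ) :=
  {y | (Fin.insertNth a t y : Fin (m + 1) → ℝ) ∈ K}

lemma insertNth_combination {m : ℕ} (a : Fin (m + 1)) (s t : ℝ) (y z : Fin m → ℝ) (b c : ℝ) :
    b • (Fin.insertNth a s y : Fin (m + 1) → ℝ) + c • (Fin.insertNth a t z : Fin (m + 1) → ℝ) =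
      Fin.insertNth a (b * s + c * t) (b • y + c • z) := by
  ext i
  refine Fin.succAboveCases a ?_ (fun j => ?_) i <;> simp

lemma slice_combination {m : ℕ} {K : Set (Fin (m + 1) → ℝ)} (hK : Convex ℝ K) {a : Fin (m + 1)}
    {s t : ℝ} {y z : Fin m → ℝ} (hy : y ∈ slice K a s) (hz : z ∈ slice K a t) {b c : ℝ}
    (hb : 0 ≤ b) (hc : 0 ≤ c) (hbc : b + c = 1) : b • y + c • z ∈ slice K a (b * s + c * t) := by
  show (Fin.insertNth a _ _ : Fin (m + 1) → ℝ) ∈ K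
  rw [← insertNth_combination]
  exact hK hy hz hb hc hbc

lemma measurableSet_slice {m : ℕ} {K : Set (Fin (m + 1) → ℝ)} (hK : MeasurableSet K)
    (a : Fin (m + 1)) (t : ℝ) : MeasurableSet (slice K a t) :=
  (((volume_preserving_piFinSuccAbove (fun _ : Fin (m + 1) => ℝ) a).symm).measurable.comp
    measurable_prodMk_left) hK

lemma slice_subset {m : ℕ} {K : Set (Fin (m + 1) → ℝ)} (hK : K ⊆ Set.Icc 0 1)
    (a : Fin (m + 1)) (t : ℝ) : slice K a t ⊆ Set.Icc 0 1 := by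
  intro y hy
  have h := hK hy
  refine ⟨fun j => ?_, fun j => ?_⟩
  · simpa using h.1 (a.succAbove j)
  · simpa using h.2 (a.succAbove j)

lemma slice_eq_empty {m : ℕ} {K : Set (Fin (m + 1) → ℝ)} (hK : K ⊆ Set.Icc 0 1)
    (a : Fin (m + 1)) {t : ℝ} (ht : t ∉ Set.Icc (0 : ℝ) 1) : slice K a t = ∅ := by
  refine Set.eq_empty_of_forall_notMem fun y hy => ht ?_
  have h := hK hy
  exact ⟨by simpa using h.1 a, by simpa using h.2 a⟩

lemma volume_slice_lt_top {m : ℕ} {K : Set (Fin (m + 1) → ℝ)} (hK : K ⊆ Set.Icc 0 1)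
    (a : Fin (m + 1)) (t : ℝ) : volume (slice K a t) ≠ ⊤ :=
  ((measure_mono (slice_subset hK a t)).trans_lt isCompact_Icc.measure_lt_top).ne

/-- Fubini's theorem for functions of a single coordinate on a convex body. -/
lemma setIntegral_coord {m : ℕ} {K : Set (Fin (m + 1) → ℝ)} (hK : IsCompact K)
    (a : Fin (m + 1)) {φ : ℝ → ℝ} (hφ : Continuous φ) :
    ∫ x in K, φ (x a) = ∫ t, φ t * volume.real (slice K a t) := by
  have mp := (volume_preserving_piFinSuccAbove (fun _ : Fin (m + 1) => ℝ) a).symm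
  set e := (MeasurableEquiv.piFinSuccAbove (fun _ : Fin (m + 1) => ℝ) a).symm with he
  have hint : Integrable (K.indicator fun x => φ (x a)) := by
    rw [integrable_indicator_iff hK.measurableSet]
    exact (hφ.comp (continuous_apply a)).continuousOn.integrableOn_compact hK
  rw [← integral_indicator hK.measurableSet, ← mp.integral_comp', Measure.volume_eq_prod]
  have hint' : Integrable (fun p => K.indicator (fun x => φ (x a)) (e p))
      (volume.prod volume) := by
    have := mp.integrable_comp_emb e.measurableEmbedding |>.2 hint
    exact this
  rw [integral_prod _ hint']
  congr 1; ext t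
  have : (fun y => K.indicator (fun x => φ (x a)) (e (t, y))) =
      (slice K a t).indicator fun _ => φ t := by
    ext y
    by_cases hy : y ∈ slice K a t
    · have hy' : e (t, y) ∈ K := hy
      rw [Set.indicator_of_mem hy, Set.indicator_of_mem hy']
      congr 1
      exact Fin.insertNth_apply_same (α := fun _ => ℝ) a t y
    · have hy' : e (t, y) ∉ K := hy
      rw [Set.indicator_of_notMem hy, Set.indicator_of_notMem hy']
  rw [this, integral_indicator (measurableSet_slice hK.measurableSet a t), setIntegral_const,
    smul_eq_mul, mul_comm]

open scoped Pointwise in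
/-- The normalised marginal of a convex body `K` inside the unit cube along a coordinate. -/
theorem exists_needle {m : ℕ} {K : Set (Fin (m + 1) → ℝ)} (hK : IsCompact K)
    (hc : Convex ℝ K) (hsub : K ⊆ Set.Icc 0 1) (hpos : 0 < volume.real K) (a : Fin (m + 1)) :
    ∃ w : ℝ → ℝ, Needle (m + 1) w ∧ ∀ φ : ℝ → ℝ, Continuous φ →
      ∫ x in K, φ (x a) = volume.real K * ∫ t, φ t * w t := by
  have hmain : ∀ φ : ℝ → ℝ, Continuous φ →
      ∫ x in K, φ (x a) =
        volume.real K * ∫ t, φ t * (volume.real (slice K a t) / volume.real K) := by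
    intro φ hφ
    rw [setIntegral_coord hK a hφ, ← integral_const_mul]
    congr 1; ext t
    field_simp
  refine ⟨fun t => volume.real (slice K a t) / volume.real K, ?_, hmain⟩
  refine ⟨?_, fun x => by positivity, ⟨1 / volume.real K, fun t => ?_⟩, fun t ht => ?_, ?_, ?_, ?_⟩
  · refine Measurable.div_const ?_ _
    have : Measurable fun t => volume (slice K a t) :=
      measurable_measure_prodMk_left ((volume_preserving_piFinSuccAbove
        (fun _ : Fin (m + 1) => ℝ) a).symm.measurable hK.measurableSet)
    exact this.ennreal_toReal
  · gcongr
    calc volume.real (slice K a t) ≤ volume.real (Set.Icc (0 : Fin m → ℝ) 1) :=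
          measureReal_mono (slice_subset hsub a t) isCompact_Icc.measure_lt_top.ne
      _ = 1 := by simp [Measure.real, Real.volume_Icc_pi]
  · simp [slice_eq_empty hsub a ht]
  · have := hmain (fun _ => 1) continuous_const
    simp only [setIntegral_const, smul_eq_mul, mul_one, one_mul] at this
    have h2 : volume.real K * (∫ t, volume.real (slice K a t) / volume.real K) =
      volume.real K * 1 := by rw [← this, mul_one]
    exact mul_left_cancel₀ hpos.ne' h2
  · have key := LogConc.marginal m (E := ℝ)
      (F := fun p => K.indicator (fun _ => (1 : ℝ)) (Fin.insertNth a p.1 p.2)) ?_ ?_ ?_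
      (B := 1) (R := 1) ?_ ?_
    · have e : ∀ t, ∫ y : Fin m → ℝ, K.indicator (fun _ => (1 : ℝ))
          (Fin.insertNth a t y : Fin (m + 1) → ℝ) = volume.real (slice K a t) := by
        intro t
        have : (fun y : Fin m → ℝ => K.indicator (fun _ => (1 : ℝ))
            (Fin.insertNth a t y : Fin (m + 1) → ℝ)) = (slice K a t).indicator fun _ => 1 := rfl
        rw [this, integral_indicator (measurableSet_slice hK.measurableSet a t)]
        simp
      simp only [e] at key
      intro x y s hs0 hs1
      have := key x y s hs0 hs1
      show (volume.real (slice K a x) / volume.real K) ^ (1 - s) *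
        (volume.real (slice K a y) / volume.real K) ^ s ≤
          volume.real (slice K a ((1 - s) * x + s * y)) / volume.real K
      rw [Real.div_rpow (by positivity) hpos.le, Real.div_rpow (by positivity) hpos.le,
        div_mul_div_comm, ← Real.rpow_add hpos, sub_add_cancel, Real.rpow_one]
      gcongr
      exact this
    · intro p q s hs0 hs1
      have h1s : 0 < 1 - s := by linarith
      by_cases hp : (Fin.insertNth a p.1 p.2 : Fin (m + 1) → ℝ) ∈ K
      · by_cases hq : (Fin.insertNth a q.1 q.2 : Fin (m + 1) → ℝ) ∈ K
        · have hr : (Fin.insertNth a ((1 - s) • p + s • q).1 ((1 - s) • p + s • q).2 :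
              Fin (m + 1) → ℝ) ∈ K :=
            slice_combination hc (a := a) hp hq h1s.le hs0.le (by ring)
          simp only [Set.indicator_of_mem hp, Set.indicator_of_mem hq, Set.indicator_of_mem hr]
          simp
        · simp only [Set.indicator_of_notMem hq]
          rw [Real.zero_rpow hs0.ne', mul_zero]
          exact Set.indicator_nonneg (fun _ _ => zero_le_one) _
      · simp only [Set.indicator_of_notMem hp]
        rw [Real.zero_rpow h1s.ne', zero_mul]
        exact Set.indicator_nonneg (fun _ _ => zero_le_one) _
    · exact fun p => Set.indicator_nonneg (fun _ _ => zero_le_one) _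
    · intro t
      exact (measurable_const (a := (1 : ℝ))).indicator (measurableSet_slice hK.measurableSet a t)
    · exact fun p => Set.indicator_le_self' (fun _ _ => zero_le_one) _
    · intro t y hy
      refine Set.indicator_of_notMem (fun hmem => ?_) _
      have := slice_subset hsub a t (show y ∈ slice K a t from hmem)
      refine absurd hy (not_lt.2 ?_)
      rw [pi_norm_le_iff_of_nonneg zero_le_one]
      intro i
      rw [Real.norm_eq_abs, abs_of_nonneg (this.1 i)]
      exact this.2 i
  · intro x y r hx hr0 hr1
    have h1r : 0 < 1 - r := by linarith
    have hne : (slice K a x).Nonempty := by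
      by_contra hc
      rw [Set.not_nonempty_iff_eq_empty] at hc
      simp [hc] at hx
    obtain ⟨z, hz⟩ := hne
    have hincl : (fun v => (1 - r) • v + r • z) '' slice K a y ⊆
        slice K a ((1 - r) * y + r * x) := by
      rintro _ ⟨v, hv, rfl⟩
      exact slice_combination hc hv hz h1r.le hr0 (by ring)
    have hvol : volume ((fun v => (1 - r) • v + r • z) '' slice K a y) =
        ENNReal.ofReal ((1 - r) ^ m) * volume (slice K a y) := by
      have : (fun v => (1 - r) • v + r • z) '' slice K a y =
          (fun v => v + r • z) '' ((1 - r) • slice K a y) := by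
        rw [← Set.image_smul, Set.image_image]
      rw [this, Set.image_add_right, measure_preimage_add_right, Measure.addHaar_smul]
      simp [abs_of_pos (pow_pos h1r m)]
    have := measureReal_mono hincl (volume_slice_lt_top hsub a _)
    rw [Measure.real, hvol, ENNReal.toReal_mul, ENNReal.toReal_ofReal (by positivity)] at this
    rw [Nat.add_sub_cancel, ← mul_div_assoc]
    gcongr
    exact this

/-! ### Localization by bisection -/

/-- An affine function of two coordinates. -/
def planeForm {n : ℕ} (a b : Fin n) (r₁ r₂ c₁ c₂ : ℝ) (x : Fin n → ℝ) : ℝ :=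
  c₁ * (x a - r₁) + c₂ * (x b - r₂)

lemma continuous_planeForm {n : ℕ} (a b : Fin n) (r₁ r₂ c₁ c₂ : ℝ) :
    Continuous (planeForm a b r₁ r₂ c₁ c₂) := by
  unfold planeForm; fun_prop

/-- A hyperplane given by a nonzero linear form in two coordinates is a null set. -/
lemma volume_planeForm_eq_zero {n : ℕ} {a b : Fin n} (hab : a ≠ b) (r₁ r₂ : ℝ) {c₁ c₂ : ℝ}
    (hc : ¬ (c₁ = 0 ∧ c₂ = 0)) : volume {x | planeForm a b r₁ r₂ c₁ c₂ x = 0} = 0 := by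
  rcases Set.eq_empty_or_nonempty {x | planeForm a b r₁ r₂ c₁ c₂ x = 0} with he | ⟨p, hp⟩
  · rw [he]; simp
  let L : (Fin n → ℝ) →ₗ[ℝ] ℝ := c₁ • LinearMap.proj a + c₂ • LinearMap.proj b
  have hL : ∀ x, L x = c₁ * x a + c₂ * x b := fun x => rfl
  have e : {x | planeForm a b r₁ r₂ c₁ c₂ x = 0} =
      (AffineSubspace.mk' p (LinearMap.ker L) : Set (Fin n → ℝ)) := by
    ext x
    rw [SetLike.mem_coe, AffineSubspace.mem_mk', LinearMap.mem_ker, hL]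
    have hp' : planeForm a b r₁ r₂ c₁ c₂ p = 0 := hp
    show planeForm a b r₁ r₂ c₁ c₂ x = 0 ↔ _
    unfold planeForm at *
    simp only [vsub_eq_sub, Pi.sub_apply]
    constructor <;> intro h <;> linarith
  rw [e]
  apply Measure.addHaar_affineSubspace
  intro htop
  have h1 : LinearMap.ker L = ⊤ := by
    rw [← AffineSubspace.direction_mk' p (LinearMap.ker L), htop, AffineSubspace.direction_top]
  have h2 : ∀ x : Fin n → ℝ, c₁ * x a + c₂ * x b = 0 := fun x => by
    rw [← hL, ← LinearMap.mem_ker, h1]; trivial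
  refine hc ⟨?_, ?_⟩
  · simpa [hab.symm] using h2 (Pi.single a 1)
  · simpa [hab] using h2 (Pi.single b 1)

lemma setIntegral_halves {n : ℕ} {K : Set (Fin n → ℝ)} (hK : IsCompact K) {f : (Fin n → ℝ) → ℝ}
    (hf : Continuous f) {a b : Fin n} (hab : a ≠ b) (r₁ r₂ : ℝ) {c₁ c₂ : ℝ}
    (hc : ¬ (c₁ = 0 ∧ c₂ = 0)) :
    (∫ x in K ∩ {x | 0 ≤ planeForm a b r₁ r₂ c₁ c₂ x}, f x) +
      (∫ x in K ∩ {x | planeForm a b r₁ r₂ c₁ c₂ x ≤ 0}, f x) = ∫ x in K, f x := by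
  have hc' := continuous_planeForm a b r₁ r₂ c₁ c₂
  rw [← integral_inter_add_sdiff (s := K) (t := {x | 0 ≤ planeForm a b r₁ r₂ c₁ c₂ x})
    (isClosed_le continuous_const hc').measurableSet (hf.continuousOn.integrableOn_compact hK)]
  congr 1
  apply setIntegral_congr_set
  have h0 := volume_planeForm_eq_zero hab r₁ r₂ hc
  have h1 : ∀ᵐ x, planeForm a b r₁ r₂ c₁ c₂ x ≠ 0 := by
    rw [ae_iff]; simpa using h0
  filter_upwards [h1] with x hx
  apply propext
  show (x ∈ K ∧ planeForm a b r₁ r₂ c₁ c₂ x ≤ 0) ↔ (x ∈ K ∧ ¬ (0 ≤ planeForm a b r₁ r₂ c₁ c₂ x))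
  rw [not_le, lt_iff_le_and_ne]
  tauto

/-- The integral over the half of `K` bounded by a line through `(r₁, r₂)` depends continuously on the
direction of the line, which gives access to the intermediate value theorem. -/
lemma continuous_halfPlane_integral {n : ℕ} {K : Set (Fin n → ℝ)} (hK : IsCompact K)
    {f : (Fin n → ℝ) → ℝ} (hf : Continuous f) {a b : Fin n} (hab : a ≠ b) (r₁ r₂ : ℝ) :
    Continuous fun θ : ℝ =>
      ∫ x in K ∩ {x | 0 ≤ planeForm a b r₁ r₂ (Real.cos θ) (Real.sin θ) x}, f x := by
  have hset : ∀ θ : ℝ, MeasurableSet {x : Fin n → ℝ |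
      0 ≤ planeForm a b r₁ r₂ (Real.cos θ) (Real.sin θ) x} := fun θ =>
    (isClosed_le continuous_const (continuous_planeForm a b r₁ r₂ _ _)).measurableSet
  have e : ∀ θ : ℝ, ∫ x in K ∩ {x | 0 ≤ planeForm a b r₁ r₂ (Real.cos θ) (Real.sin θ) x}, f x =
      ∫ x in K, {x | 0 ≤ planeForm a b r₁ r₂ (Real.cos θ) (Real.sin θ) x}.indicator f x :=
    fun θ => (setIntegral_indicator (hset θ)).symm
  simp only [e]
  have hfi : IntegrableOn f K := hf.continuousOn.integrableOn_compact hK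
  refine continuous_iff_continuousAt.2 fun θ => ?_
  refine continuousAt_of_dominated (bound := fun x => ‖f x‖) ?_ ?_ hfi.norm ?_
  · exact Filter.Eventually.of_forall fun θ => (hf.measurable.indicator (hset θ)).aestronglyMeasurable
  · exact Filter.Eventually.of_forall fun θ => Filter.Eventually.of_forall fun x =>
      norm_indicator_le_norm_self _ _
  · have h0 := volume_planeForm_eq_zero hab r₁ r₂ (c₁ := Real.cos θ) (c₂ := Real.sin θ) (by
      rintro ⟨h1, h2⟩
      have := Real.sin_sq_add_cos_sq θ
      rw [h1, h2] at this
      norm_num at this)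
    have h1 : ∀ᵐ x, planeForm a b r₁ r₂ (Real.cos θ) (Real.sin θ) x ≠ 0 := by
      rw [ae_iff]; simpa using h0
    filter_upwards [ae_restrict_of_ae h1] with x hx
    have hct : Continuous fun θ : ℝ => planeForm a b r₁ r₂ (Real.cos θ) (Real.sin θ) x := by
      unfold planeForm; fun_prop
    rcases lt_or_gt_of_ne hx with hx | hx
    · have : (fun η : ℝ => {x | 0 ≤ planeForm a b r₁ r₂ (Real.cos η) (Real.sin η) x}.indicator f x)
          =ᶠ[nhds θ] fun _ => 0 := by
        filter_upwards [hct.continuousAt.eventually_lt continuousAt_const hx] with η hη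
        have hx' : x ∉ {x | 0 ≤ planeForm a b r₁ r₂ (Real.cos η) (Real.sin η) x} :=
          fun h => absurd hη (not_lt.2 h)
        exact Set.indicator_of_notMem hx' _
      exact continuousAt_const.congr this.symm
    · have : (fun η : ℝ => {x | 0 ≤ planeForm a b r₁ r₂ (Real.cos η) (Real.sin η) x}.indicator f x)
          =ᶠ[nhds θ] fun _ => f x := by
        filter_upwards [continuousAt_const.eventually_lt hct.continuousAt hx] with η hη
        have hx' : x ∈ {x | 0 ≤ planeForm a b r₁ r₂ (Real.cos η) (Real.sin η) x} := le_of_lt hη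
        exact Set.indicator_of_mem hx' _
      exact continuousAt_const.congr this.symm

/-- The convex bodies produced by the bisection process: `h` has integral zero and `G` has positive
integral. -/
structure Bisected {n : ℕ} (h G : (Fin n → ℝ) → ℝ) (K : Set (Fin n → ℝ)) : Prop where
  compact : IsCompact K
  convex : Convex ℝ K
  int_zero : ∫ x in K, h x = 0
  int_pos : 0 < ∫ x in K, G x

lemma Bisected.nonempty {n : ℕ} {h G : (Fin n → ℝ) → ℝ} {K : Set (Fin n → ℝ)}
    (hK : Bisected h G K) : K.Nonempty := by
  rw [Set.nonempty_iff_ne_empty]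
  rintro rfl
  have := hK.int_pos
  simp at this

lemma convex_planeForm_nonneg {n : ℕ} (a b : Fin n) (r₁ r₂ c₁ c₂ : ℝ) :
    Convex ℝ {x | 0 ≤ planeForm a b r₁ r₂ c₁ c₂ x} := by
  intro x hx y hy s t hs ht hst
  have hx' : 0 ≤ planeForm a b r₁ r₂ c₁ c₂ x := hx
  have hy' : 0 ≤ planeForm a b r₁ r₂ c₁ c₂ y := hy
  show 0 ≤ planeForm a b r₁ r₂ c₁ c₂ (s • x + t • y)
  have : planeForm a b r₁ r₂ c₁ c₂ (s • x + t • y) =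
      s * planeForm a b r₁ r₂ c₁ c₂ x + t * planeForm a b r₁ r₂ c₁ c₂ y := by
    obtain rfl : s = 1 - t := by linarith
    simp only [planeForm, Pi.add_apply, Pi.smul_apply, smul_eq_mul]
    ring
  rw [this]
  positivity

/-- One bisection step: through every point of a coordinate plane passes a line which splits the
body into halves on which `h` still has integral zero. -/
lemma Bisected.bisect {n : ℕ} {h G : (Fin n → ℝ) → ℝ} (hh : Continuous h) (hG : Continuous G)
    {K : Set (Fin n → ℝ)} (hK : Bisected h G K) {a b : Fin n} (hab : a ≠ b) (r₁ r₂ : ℝ) :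
    ∃ K' ⊆ K, Bisected h G K' ∧ ∃ c₁ c₂ : ℝ, ¬ (c₁ = 0 ∧ c₂ = 0) ∧
      ∀ x ∈ K', 0 ≤ planeForm a b r₁ r₂ c₁ c₂ x := by
  set Φ : ℝ → ℝ := fun θ =>
    ∫ x in K ∩ {x | 0 ≤ planeForm a b r₁ r₂ (Real.cos θ) (Real.sin θ) x}, h x with hΦ
  have hΦc : Continuous Φ := continuous_halfPlane_integral hK.compact hh hab r₁ r₂
  have hcs : ∀ θ : ℝ, ¬ (Real.cos θ = 0 ∧ Real.sin θ = 0) := by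
    rintro θ ⟨h1, h2⟩
    have := Real.sin_sq_add_cos_sq θ
    rw [h1, h2] at this
    norm_num at this
  have hsum : Φ 0 + Φ Real.pi = 0 := by
    have := setIntegral_halves hK.compact hh hab r₁ r₂ (hcs 0)
    rw [hK.int_zero] at this
    rw [← this, hΦ]
    congr 2
    simp only [planeForm, Real.cos_pi, Real.sin_pi, Real.cos_zero, Real.sin_zero]
    congr 2
    ext x
    show (x ∈ K ∧ 0 ≤ -1 * (x a - r₁) + 0 * (x b - r₂)) ↔
      (x ∈ K ∧ 1 * (x a - r₁) + 0 * (x b - r₂) ≤ 0)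
    refine and_congr_right fun _ => ?_
    constructor <;> intro h <;> linarith
  have hzero : (0 : ℝ) ∈ Set.uIcc (Φ 0) (Φ Real.pi) := by
    rw [Set.mem_uIcc]
    rcases le_total (Φ 0) 0 with h0 | h0
    · left; exact ⟨h0, by linarith⟩
    · right; exact ⟨by linarith, h0⟩
  obtain ⟨θ, -, hθ⟩ := intermediate_value_uIcc hΦc.continuousOn hzero
  have s1 := setIntegral_halves hK.compact hh hab r₁ r₂ (hcs θ)
  have s2 := setIntegral_halves hK.compact hG hab r₁ r₂ (hcs θ)
  have hneg : {x : Fin n → ℝ | planeForm a b r₁ r₂ (Real.cos θ) (Real.sin θ) x ≤ 0} =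
      {x | 0 ≤ planeForm a b r₁ r₂ (-Real.cos θ) (-Real.sin θ) x} := by
    ext x
    show planeForm a b r₁ r₂ (Real.cos θ) (Real.sin θ) x ≤ 0 ↔
      0 ≤ planeForm a b r₁ r₂ (-Real.cos θ) (-Real.sin θ) x
    unfold planeForm
    constructor <;> intro h <;> linarith
  rw [hK.int_zero, show (∫ x in K ∩ {x | 0 ≤ planeForm a b r₁ r₂ (Real.cos θ) (Real.sin θ) x}, h x)
    = 0 from hθ, zero_add] at s1
  have hpos := hK.int_pos
  have hclosed : ∀ c₁ c₂ : ℝ, IsClosed {x : Fin n → ℝ | 0 ≤ planeForm a b r₁ r₂ c₁ c₂ x} :=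
    fun c₁ c₂ => isClosed_le continuous_const (continuous_planeForm a b r₁ r₂ _ _)
  rcases lt_or_ge 0
    (∫ x in K ∩ {x | 0 ≤ planeForm a b r₁ r₂ (Real.cos θ) (Real.sin θ) x}, G x) with hp | hp
  · exact ⟨_, Set.inter_subset_left, ⟨hK.compact.inter_right (hclosed _ _),
      hK.convex.inter (convex_planeForm_nonneg a b r₁ r₂ _ _), hθ, hp⟩, _, _, hcs θ,
      fun x hx => hx.2⟩
  · rw [hneg] at s1 s2
    refine ⟨_, Set.inter_subset_left, ⟨hK.compact.inter_right (hclosed _ _),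
      hK.convex.inter (convex_planeForm_nonneg a b r₁ r₂ _ _), s1, by linarith⟩, _, _, ?_,
      fun x hx => hx.2⟩
    rw [neg_eq_zero, neg_eq_zero]
    exact hcs θ

/-- Three points of the plane are collinear if every rational point can be separated from them
weakly by a line through that point. -/
lemma det_eq_zero_of_separated {x₁ x₂ y₁ y₂ z₁ z₂ : ℝ}
    (hsep : ∀ r₁ r₂ : ℚ, ∃ c₁ c₂ : ℝ, ¬ (c₁ = 0 ∧ c₂ = 0) ∧
      0 ≤ c₁ * (x₁ - r₁) + c₂ * (x₂ - r₂) ∧ 0 ≤ c₁ * (y₁ - r₁) + c₂ * (y₂ - r₂) ∧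
      0 ≤ c₁ * (z₁ - r₁) + c₂ * (z₂ - r₂)) :
    (y₁ - x₁) * (z₂ - x₂) - (y₂ - x₂) * (z₁ - x₁) = 0 := by
  by_contra hD
  set D := (y₁ - x₁) * (z₂ - x₂) - (y₂ - x₂) * (z₁ - x₁) with hDdef
  -- Barycentric coordinates of a point of the plane with respect to the triangle.
  let lY : ℝ × ℝ → ℝ := fun p => ((p.1 - x₁) * (z₂ - x₂) - (p.2 - x₂) * (z₁ - x₁)) / D
  let lZ : ℝ × ℝ → ℝ := fun p => ((y₁ - x₁) * (p.2 - x₂) - (y₂ - x₂) * (p.1 - x₁)) / D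
  have cY : Continuous lY := by simp only [lY]; fun_prop
  have cZ : Continuous lZ := by simp only [lZ]; fun_prop
  have hopen : IsOpen {p : ℝ × ℝ | 0 < lY p ∧ 0 < lZ p ∧ 0 < 1 - lY p - lZ p} :=
    (isOpen_lt continuous_const cY).inter ((isOpen_lt continuous_const cZ).inter
      (isOpen_lt continuous_const ((continuous_const.sub cY).sub cZ)))
  have hne : {p : ℝ × ℝ | 0 < lY p ∧ 0 < lZ p ∧ 0 < 1 - lY p - lZ p}.Nonempty := by
    refine ⟨((x₁ + y₁ + z₁) / 3, (x₂ + y₂ + z₂) / 3), ?_⟩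
    have e1 : lY ((x₁ + y₁ + z₁) / 3, (x₂ + y₂ + z₂) / 3) = 1 / 3 := by
      simp only [lY]; rw [div_eq_iff hD, hDdef]; ring
    have e2 : lZ ((x₁ + y₁ + z₁) / 3, (x₂ + y₂ + z₂) / 3) = 1 / 3 := by
      simp only [lZ]; rw [div_eq_iff hD, hDdef]; ring
    show 0 < lY _ ∧ 0 < lZ _ ∧ 0 < 1 - lY _ - lZ _
    rw [e1, e2]; norm_num
  obtain ⟨⟨q₁, q₂⟩, h1, h2, h3⟩ :=
    (Rat.denseRange_cast (𝕜 := ℝ)).prodMap (Rat.denseRange_cast (𝕜 := ℝ)) |>.exists_mem_open hopen hne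
  obtain ⟨c₁, c₂, hc, hx, hy, hz⟩ := hsep q₁ q₂
  set p : ℝ × ℝ := Prod.map (Rat.cast : ℚ → ℝ) (Rat.cast : ℚ → ℝ) (q₁, q₂) with hp
  have hp1 : p.1 = q₁ := rfl
  have hp2 : p.2 = q₂ := rfl
  have b1 : (1 - lY p - lZ p) * (x₁ - q₁) + lY p * (y₁ - q₁) + lZ p * (z₁ - q₁) = 0 := by
    simp only [lY, lZ, hp1, hp2]; field_simp; rw [hDdef]; ring
  have b2 : (1 - lY p - lZ p) * (x₂ - q₂) + lY p * (y₂ - q₂) + lZ p * (z₂ - q₂) = 0 := by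
    simp only [lY, lZ, hp1, hp2]; field_simp; rw [hDdef]; ring
  have hsum : (1 - lY p - lZ p) * (c₁ * (x₁ - q₁) + c₂ * (x₂ - q₂)) +
      lY p * (c₁ * (y₁ - q₁) + c₂ * (y₂ - q₂)) + lZ p * (c₁ * (z₁ - q₁) + c₂ * (z₂ - q₂)) = 0 := by
    linear_combination c₁ * b1 + c₂ * b2
  have m1 := mul_nonneg h3.le hx
  have m2 := mul_nonneg h1.le hy
  have m3 := mul_nonneg h2.le hz
  have z1 : c₁ * (x₁ - q₁) + c₂ * (x₂ - q₂) = 0 := by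
    have : (1 - lY p - lZ p) * (c₁ * (x₁ - q₁) + c₂ * (x₂ - q₂)) = 0 := by linarith
    exact (mul_eq_zero.1 this).resolve_left h3.ne'
  have z2 : c₁ * (y₁ - q₁) + c₂ * (y₂ - q₂) = 0 := by
    have : lY p * (c₁ * (y₁ - q₁) + c₂ * (y₂ - q₂)) = 0 := by linarith
    exact (mul_eq_zero.1 this).resolve_left h1.ne'
  have z3 : c₁ * (z₁ - q₁) + c₂ * (z₂ - q₂) = 0 := by
    have : lZ p * (c₁ * (z₁ - q₁) + c₂ * (z₂ - q₂)) = 0 := by linarith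
    exact (mul_eq_zero.1 this).resolve_left h2.ne'
  refine hc ⟨?_, ?_⟩
  · have : c₁ * D = 0 := by
      rw [hDdef]; linear_combination (z₂ - x₂) * (z2 - z1) - (y₂ - x₂) * (z3 - z1)
    exact (mul_eq_zero.1 this).resolve_right hD
  · have : c₂ * D = 0 := by
      rw [hDdef]; linear_combination (y₁ - x₁) * (z3 - z1) - (z₁ - x₁) * (z2 - z1)
    exact (mul_eq_zero.1 this).resolve_right hD

/-- The localization lemma: iterated bisection through all rational points of all coordinate planes
leads to bodies arbitrarily close to a line, since the intersection of the bodies contains no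
nondegenerate triangle. The line is a graph over one of the coordinate axes. -/
theorem Bisected.localize {n : ℕ} (hn : 0 < n) {h G : (Fin n → ℝ) → ℝ} (hh : Continuous h)
    (hG : Continuous G) {K₀ : Set (Fin n → ℝ)} (hK₀ : Bisected h G K₀) {δ : ℝ} (hδ : 0 < δ) :
    ∃ K ⊆ K₀, Bisected h G K ∧ ∃ (a : Fin n) (p v : Fin n → ℝ), v a = 1 ∧
      ∀ x ∈ K, ‖x - (p + (x a - p a) • v)‖ < δ := by
  have : Nonempty (Fin n) := ⟨⟨0, hn⟩⟩
  obtain ⟨e, he⟩ := exists_surjective_nat (Fin n × Fin n × ℚ × ℚ)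
  have step : ∀ (K : {K // Bisected h G K}) (i : Fin n × Fin n × ℚ × ℚ),
      ∃ K' : {K // Bisected h G K}, K'.1 ⊆ K.1 ∧ (i.1 ≠ i.2.1 → ∃ c₁ c₂ : ℝ,
        ¬ (c₁ = 0 ∧ c₂ = 0) ∧ ∀ x ∈ K'.1, 0 ≤ planeForm i.1 i.2.1 i.2.2.1 i.2.2.2 c₁ c₂ x) := by
    rintro ⟨K, hK⟩ ⟨a, b, r₁, r₂⟩
    by_cases hab : a = b
    · exact ⟨⟨K, hK⟩, subset_rfl, fun h => absurd hab h⟩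
    · obtain ⟨K', h1, h2, h3⟩ := hK.bisect hh hG hab r₁ r₂
      exact ⟨⟨K', h2⟩, h1, fun _ => h3⟩
  choose T hT1 hT2 using step
  let S : ℕ → {K // Bisected h G K} := fun k => Nat.rec ⟨K₀, hK₀⟩ (fun k K => T K (e k)) k
  have hS : ∀ k, S (k + 1) = T (S k) (e k) := fun k => rfl
  have hanti : Antitone fun k => (S k).1 := antitone_nat_of_succ_le fun k => by
    rw [hS]; exact hT1 _ _
  have hcomp : ∀ k, IsCompact (S k).1 := fun k => (S k).2.compact
  obtain ⟨p, hp⟩ := IsCompact.nonempty_iInter_of_sequence_nonempty_isCompact_isClosed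
    (fun k => (S k).1) (fun k => hanti k.le_succ) (fun k => (S k).2.nonempty) (hcomp 0)
    (fun k => (hcomp k).isClosed)
  have hdet : ∀ x ∈ ⋂ k, (S k).1, ∀ y ∈ ⋂ k, (S k).1, ∀ z ∈ ⋂ k, (S k).1, ∀ a b, a ≠ b →
      (y a - x a) * (z b - x b) - (y b - x b) * (z a - x a) = 0 := by
    intro x hx y hy z hz a b hab
    refine det_eq_zero_of_separated fun r₁ r₂ => ?_
    obtain ⟨k, hk⟩ := he (a, b, r₁, r₂)
    have := hT2 (S k) (e k)
    rw [← hS, hk] at this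
    obtain ⟨c₁, c₂, hc, hpos⟩ := this hab
    exact ⟨c₁, c₂, hc, hpos x (Set.mem_iInter.1 hx (k + 1)),
      hpos y (Set.mem_iInter.1 hy (k + 1)), hpos z (Set.mem_iInter.1 hz (k + 1))⟩
  have hline : ∃ (a : Fin n) (v : Fin n → ℝ), v a = 1 ∧
      ∀ x ∈ ⋂ k, (S k).1, x = p + (x a - p a) • v := by
    by_cases hsub : ∀ x ∈ ⋂ k, (S k).1, x = p
    · refine ⟨⟨0, hn⟩, Pi.single ⟨0, hn⟩ 1, by simp, fun x hx => ?_⟩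
      rw [hsub x hx]; simp
    · push Not at hsub
      obtain ⟨q, hq, hqp⟩ := hsub
      obtain ⟨a, ha⟩ := Function.ne_iff.1 hqp
      have ha' : q a - p a ≠ 0 := sub_ne_zero.2 ha
      refine ⟨a, (q a - p a)⁻¹ • (q - p), by simp [ha'], fun x hx => ?_⟩
      ext b
      simp only [Pi.add_apply, Pi.smul_apply, Pi.sub_apply, smul_eq_mul]
      by_cases hab : a = b
      · subst hab; field_simp; ring
      · have := hdet p hp q hq x hx a b hab
        field_simp
        linarith
  obtain ⟨a, v, hv, hl⟩ := hline
  have hc : Continuous fun x : Fin n → ℝ => ‖x - (p + (x a - p a) • v)‖ := by fun_prop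
  obtain ⟨k, hk⟩ := exists_subset_nhds_of_isCompact (V := fun k => (S k).1)
    (hanti.directed_ge) hcomp (U := {x | ‖x - (p + (x a - p a) • v)‖ < δ}) fun x hx => by
      refine (isOpen_lt hc continuous_const).mem_nhds ?_
      show ‖x - (p + (x a - p a) • v)‖ < δ
      rw [← hl x hx]; simpa using hδ
  exact ⟨(S k).1, hanti (Nat.zero_le k), (S k).2, a, p, v, hv, fun x hx => hk hx⟩

/-! ### From the cube to needles -/

/-- The restriction of a polynomial to the line `t ↦ p + (t - p a) v`. -/
def restrictLine {n : ℕ} (f : MvPolynomial (Fin n) ℝ) (a : Fin n) (p v : Fin n → ℝ) :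
    Polynomial ℝ :=
  MvPolynomial.aeval
    (fun i => Polynomial.C (p i) + (Polynomial.X - Polynomial.C (p a)) * Polynomial.C (v i)) f

lemma eval_restrictLine {n : ℕ} (f : MvPolynomial (Fin n) ℝ) (a : Fin n) (p v : Fin n → ℝ)
    (t : ℝ) : (restrictLine f a p v).eval t = MvPolynomial.eval (p + (t - p a) • v) f := by
  unfold restrictLine
  rw [← Polynomial.coe_evalRingHom, MvPolynomial.aeval_def, MvPolynomial.hom_eval₂,
    MvPolynomial.eval, MvPolynomial.coe_eval₂Hom]
  congr 1
  · ext x; simp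
  · ext i; simp

lemma natDegree_restrictLine_le {n d : ℕ} {f : MvPolynomial (Fin n) ℝ} (hf : f.totalDegree ≤ d)
    (a : Fin n) (p v : Fin n → ℝ) : (restrictLine f a p v).natDegree ≤ d := by
  have := MvPolynomial.aeval_natDegree_le f hf (n := 1)
    (fun i => Polynomial.C (p i) + (Polynomial.X - Polynomial.C (p a)) * Polynomial.C (v i))
    (fun i => by compute_degree)
  rwa [mul_one] at this

/-- The oscillating integrand is a Lipschitz function of the phase, so that a body close to a line may
be replaced by the line. -/
lemma amplitude_osc_lip {W W' H : ℝ → ℝ} (hA : Amplitude W W' H) (s x y : ℝ) :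
    ‖Complex.exp (Complex.I * ((s * x : ℝ) : ℂ)) * (W x : ℂ) -
      Complex.exp (Complex.I * ((s * y : ℝ) : ℂ)) * (W y : ℂ)‖ ≤ (2 * |s| + 2) * |x - y| := by
  have hd : ∀ v : ℝ, HasDerivAt
      (fun v : ℝ => Complex.exp (Complex.I * ((s * v : ℝ) : ℂ)) * (W v : ℂ))
      (Complex.exp (Complex.I * ((s * v : ℝ) : ℂ)) * (Complex.I * (s : ℂ)) * (W v : ℂ) +
        Complex.exp (Complex.I * ((s * v : ℝ) : ℂ)) * (W' v : ℂ)) v := by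
    intro v
    have h1 : HasDerivAt (fun v : ℝ => ((s * v : ℝ) : ℂ)) (s : ℂ) v := by
      have : HasDerivAt (fun v : ℝ => s * v) s v := by
        simpa using (hasDerivAt_id v).const_mul s
      exact this.ofReal_comp
    exact (h1.const_mul Complex.I).cexp.mul (hA.deriv v).ofReal_comp
  have he : ∀ v : ℝ, ‖Complex.exp (Complex.I * ((s * v : ℝ) : ℂ))‖ = 1 := fun v => by
    rw [mul_comm]; exact Complex.norm_exp_ofReal_mul_I _
  have := Convex.norm_image_sub_le_of_norm_hasDerivWithin_le (s := Set.univ)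
    (C := 2 * |s| + 2) (x := y) (y := x) (fun v _ => (hd v).hasDerivWithinAt) (fun v _ => by
      refine (norm_add_le _ _).trans ?_
      simp only [norm_mul, he, Complex.norm_I, Complex.norm_real, Real.norm_eq_abs, one_mul]
      have h1 := hA.bound v
      have h2 : |W' v| ≤ 2 := by
        refine (hA.dbound v).trans ?_
        rw [div_le_iff₀ (by positivity)]
        nlinarith [sq_nonneg v]
      nlinarith [abs_nonneg s]) convex_univ (Set.mem_univ _) (Set.mem_univ _)
  simpa using this

lemma volume_real_cube (n : ℕ) : volume.real (Set.Icc (0 : Fin n → ℝ) 1) = 1 := by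
  simp [Measure.real, Real.volume_Icc_pi]

/-- The bound for one amplitude: if it fails on the cube, localization produces a needle on which
the one-dimensional bound fails. -/
theorem cube_bound {n d : ℕ} (hn : 0 < n) (hd : 0 < d) {f : MvPolynomial (Fin n) ℝ}
    (hf : f.totalDegree ≤ d) {W W' H : ℝ → ℝ} (hA : Amplitude W W' H)
    (hH : ∫ x in Set.Icc (0 : Fin n → ℝ) 1, H (MvPolynomial.eval x f) = 0) {s : ℝ} (hs : s ≠ 0) :
    ‖∫ x in Set.Icc (0 : Fin n → ℝ) 1,
      Complex.exp (Complex.I * ((s * MvPolynomial.eval x f : ℝ) : ℂ)) *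
        (W (MvPolynomial.eval x f) : ℂ)‖ ≤
      2 * (10 ^ 9 * min (d : ℝ) n * |s| ^ (-(1 / (d : ℝ)))) := by
  obtain ⟨m, rfl⟩ : ∃ m, n = m + 1 := ⟨n - 1, by omega⟩
  set Q := Set.Icc (0 : Fin (m + 1) → ℝ) 1 with hQ
  set B := 10 ^ 9 * min (d : ℝ) ((m + 1 : ℕ) : ℝ) * |s| ^ (-(1 / (d : ℝ))) with hB
  have hBp : 0 < B := by
    have : 0 < |s| := abs_pos.2 hs
    have h1 : (0 : ℝ) < d := by exact_mod_cast hd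
    have h2 : (0 : ℝ) < ((m + 1 : ℕ) : ℝ) := by exact_mod_cast hn
    positivity
  by_contra! hcon
  set ψ : ℝ → ℂ := fun v => Complex.exp (Complex.I * ((s * v : ℝ) : ℂ)) * (W v : ℂ) with hψ
  have hWc := hA.continuous
  have hHc := hA.continuousH
  have hψc : Continuous ψ := by fun_prop
  have hfc : Continuous fun x : Fin (m + 1) → ℝ => MvPolynomial.eval x f :=
    MvPolynomial.continuous_eval f
  have hQc : IsCompact Q := isCompact_Icc
  set Z := ∫ x in Q, ψ (MvPolynomial.eval x f) with hZ
  change 2 * B < ‖Z‖ at hcon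
  have hZ0 : ‖Z‖ ≠ 0 := (lt_trans (by positivity) hcon).ne'
  -- A unimodular constant rotating `Z` to the positive real axis.
  obtain ⟨u, hu1, huZ⟩ : ∃ u : ℂ, ‖u‖ = 1 ∧ u * Z = (‖Z‖ : ℂ) := by
    refine ⟨(starRingEnd ℂ Z) / (‖Z‖ : ℂ), ?_, ?_⟩
    · rw [norm_div, Complex.norm_conj, Complex.norm_real, norm_norm, div_self hZ0]
    · have : (‖Z‖ : ℂ) ≠ 0 := by exact_mod_cast hZ0
      rw [div_mul_eq_mul_div, Complex.conj_mul', div_eq_iff this, sq]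
  set Γ : ℝ → ℝ := fun v => (u * ψ v).re with hΓ
  have hΓc : Continuous Γ := by fun_prop
  have hΓlip : ∀ x y, |Γ x - Γ y| ≤ (2 * |s| + 2) * |x - y| := by
    intro x y
    have e : Γ x - Γ y = (u * (ψ x - ψ y)).re := by
      simp only [hΓ]; rw [mul_sub, Complex.sub_re]
    rw [e]
    refine (Complex.abs_re_le_norm _).trans ?_
    rw [norm_mul, hu1, one_mul]
    exact amplitude_osc_lip hA s x y
  have hK₀ : Bisected (fun x => H (MvPolynomial.eval x f))
      (fun x => Γ (MvPolynomial.eval x f) - 2 * B) Q := by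
    refine ⟨hQc, convex_Icc _ _, hH, ?_⟩
    have hi : IntegrableOn (fun x => ψ (MvPolynomial.eval x f)) Q :=
      (hψc.comp hfc).continuousOn.integrableOn_compact hQc
    have hi2 : IntegrableOn (fun x => Γ (MvPolynomial.eval x f)) Q :=
      (hΓc.comp hfc).continuousOn.integrableOn_compact hQc
    rw [integral_sub hi2 (integrableOn_const hQc.measure_lt_top.ne), setIntegral_const,
      volume_real_cube, one_smul]
    have : ∫ x in Q, Γ (MvPolynomial.eval x f) = ‖Z‖ := by
      have h1 : ∫ x in Q, u * ψ (MvPolynomial.eval x f) = (‖Z‖ : ℂ) := by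
        rw [integral_const_mul, ← hZ, huZ]
      have h2 := integral_re (𝕜 := ℂ) (hi.const_mul u)
      simp only [RCLike.re_to_complex] at h2
      rw [h1, Complex.ofReal_re] at h2
      exact h2
    rw [this]
    linarith
  -- Small enough for the errors of passing to a line, for `H` and for the integrand.
  set ε := B / (2 * |s| + 1000) with hε
  have hε0 : 0 < ε := by positivity
  have hε1 : 1000 * ε ≤ B := by
    rw [hε, ← mul_div_assoc, div_le_iff₀ (by positivity)]
    nlinarith [abs_nonneg s]
  have hε2 : (2 * |s| + 2) * ε ≤ B := by
    rw [hε, ← mul_div_assoc, div_le_iff₀ (by positivity)]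
    nlinarith [abs_nonneg s]
  obtain ⟨δ, hδ, hδε⟩ := Metric.uniformContinuousOn_iff_le.1
    ((isCompact_closedBall (0 : Fin (m + 1) → ℝ) 2).uniformContinuousOn_of_continuous
      hfc.continuousOn) ε hε0
  have hHF : Continuous fun x : Fin (m + 1) → ℝ => H (MvPolynomial.eval x f) := hHc.comp hfc
  have hΓF : Continuous fun x : Fin (m + 1) → ℝ => Γ (MvPolynomial.eval x f) := hΓc.comp hfc
  have hΓB : Continuous fun x : Fin (m + 1) → ℝ => Γ (MvPolynomial.eval x f) - 2 * B :=
    hΓF.sub continuous_const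
  obtain ⟨K, hKQ, hK, a, p, v, hva, hKl⟩ := hK₀.localize hn hHF hΓB (δ := min δ 1) (by positivity)
  set g := restrictLine f a p v with hg
  have hgd : g.natDegree ≤ d := natDegree_restrictLine_le hf a p v
  have hclose : ∀ x ∈ K, |MvPolynomial.eval x f - g.eval (x a)| ≤ ε := by
    intro x hx
    rw [hg, eval_restrictLine]
    have hxQ := hKQ hx
    have hx1 : ‖x‖ ≤ 1 := by
      rw [pi_norm_le_iff_of_nonneg zero_le_one]
      intro i
      rw [Real.norm_eq_abs, abs_of_nonneg (hxQ.1 i)]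
      exact hxQ.2 i
    have hxl := hKl x hx
    have h1 := hxl.le.trans (min_le_left _ _)
    have h2 := hxl.le.trans (min_le_right _ _)
    have := hδε x (by simpa using hx1.trans (by norm_num)) (p + (x a - p a) • v) (by
      rw [mem_closedBall_zero_iff]
      calc ‖p + (x a - p a) • v‖ = ‖x - (x - (p + (x a - p a) • v))‖ := by rw [sub_sub_cancel]
        _ ≤ ‖x‖ + ‖x - (p + (x a - p a) • v)‖ := norm_sub_le _ _
        _ ≤ 2 := by linarith) (by rw [dist_eq_norm]; exact h1)
    rwa [Real.dist_eq] at this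
  have hKc := hK.compact
  set V := volume.real K with hV
  have hVp : 0 < V := by
    refine lt_of_le_of_ne measureReal_nonneg fun h0 => ?_
    have h1 : volume K = 0 := by
      rcases (ENNReal.toReal_eq_zero_iff _).1 h0.symm with h | h
      · exact h
      · exact absurd h hKc.measure_lt_top.ne
    have := hK.int_pos
    rw [setIntegral_measure_zero _ h1] at this
    exact lt_irrefl _ this
  obtain ⟨w, hw, hwφ⟩ := exists_needle hKc hK.convex hKQ hVp a
  have iK : ∀ {φ : (Fin (m + 1) → ℝ) → ℝ}, Continuous φ → IntegrableOn φ K := fun hφ =>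
    hφ.continuousOn.integrableOn_compact hKc
  have hgc : Continuous fun x : Fin (m + 1) → ℝ => g.eval (x a) := by fun_prop
  have hHg' : Continuous fun x : Fin (m + 1) → ℝ => H (g.eval (x a)) := hHc.comp hgc
  have hΓg' : Continuous fun x : Fin (m + 1) → ℝ => Γ (g.eval (x a)) := hΓc.comp hgc
  have hHg : |∫ x, H (g.eval x) * w x| ≤ ε := by
    have h1 := hwφ (fun t => H (g.eval t)) (by fun_prop)
    have h2 : ‖∫ x in K, (H (g.eval (x a)) - H (MvPolynomial.eval x f))‖ ≤ ε * V := by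
      refine norm_setIntegral_le_of_norm_le_const hKc.measure_lt_top fun x hx => ?_
      rw [Real.norm_eq_abs]
      refine (hA.lip _ _).trans ?_
      rw [abs_sub_comm]
      exact hclose x hx
    rw [integral_sub (iK hHg') (iK hHF), hK.int_zero, sub_zero, h1,
      Real.norm_eq_abs, abs_mul, abs_of_pos hVp, mul_comm] at h2
    exact le_of_mul_le_mul_right h2 hVp
  have hΓg : B < ∫ x, Γ (g.eval x) * w x := by
    have h1 := hwφ (fun t => Γ (g.eval t)) (by fun_prop)
    have h2 : ‖∫ x in K, (Γ (g.eval (x a)) - Γ (MvPolynomial.eval x f))‖ ≤ B * V := by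
      refine norm_setIntegral_le_of_norm_le_const hKc.measure_lt_top fun x hx => ?_
      rw [Real.norm_eq_abs]
      refine (hΓlip _ _).trans (le_trans ?_ hε2)
      rw [abs_sub_comm]
      have := hclose x hx
      gcongr
    rw [integral_sub (iK hΓg') (iK hΓF), h1, Real.norm_eq_abs] at h2
    have h3 := hK.int_pos
    rw [integral_sub (iK hΓF) (integrableOn_const hKc.measure_lt_top.ne),
      setIntegral_const, smul_eq_mul] at h3
    have h4 := (abs_le.1 h2).1
    have h5 : V * B < V * ∫ x, Γ (g.eval x) * w x := by
      change 0 < _ - V * _ at h3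
      linarith
    exact lt_of_mul_lt_mul_left h5 hVp.le
  have hbound := needle_bound hn hd hw hgd hA hs hHg
  rw [max_eq_right (by simpa [hB] using hε1)] at hbound
  have hwi : Integrable fun x => ψ (g.eval x) * (w x : ℂ) := by
    have h1 : Integrable fun x => (w x : ℂ) := hw.integrable.ofReal
    refine h1.bdd_mul (c := 2) (by fun_prop) (Filter.Eventually.of_forall fun x => ?_)
    simp only [hψ]
    rw [norm_mul, Complex.norm_real, mul_comm Complex.I, Complex.norm_exp_ofReal_mul_I, one_mul]
    exact hA.bound _
  have hfin : ∫ x, Γ (g.eval x) * w x ≤ ‖∫ x, ψ (g.eval x) * (w x : ℂ)‖ := by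
    have h2 := integral_re (𝕜 := ℂ) (hwi.const_mul u)
    simp only [RCLike.re_to_complex] at h2
    have e : ∀ x, (u * (ψ (g.eval x) * (w x : ℂ))).re = Γ (g.eval x) * w x := fun x => by
      rw [← mul_assoc, Complex.re_mul_ofReal]
    simp only [e] at h2
    rw [h2, integral_const_mul]
    refine (Complex.re_le_norm _).trans ?_
    rw [norm_mul, hu1, one_mul]
  have hfin2 : ‖∫ x, ψ (g.eval x) * (w x : ℂ)‖ ≤ B := hbound
  linarith

/-- **The Carbery–Wright conjecture (2001).**  There is an absolute constant `C > 0` such that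
for all `n, d ∈ ℕ` and every polynomial `f` of degree at most `d` with
`∫_{[0,1]ⁿ} f = 0` and `∫_{[0,1]ⁿ} |f| = 1`, one has
`|∫_{[0,1]ⁿ} e^{itf(x)} dx| ≤ C · min{d,n} · |t|^{-1/d}` for every `t ≠ 0`. -/
theorem carbery_wright_conjecture :
    ∃ C : ℝ, 0 < C ∧ ∀ (n d : ℕ), 0 < n → 0 < d →
      ∀ f : MvPolynomial (Fin n) ℝ, f.totalDegree ≤ d →
        (∫ x in Set.Icc (0 : Fin n → ℝ) 1, MvPolynomial.eval x f) = 0 →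
        (∫ x in Set.Icc (0 : Fin n → ℝ) 1, |MvPolynomial.eval x f|) = 1 →
      ∀ t : ℝ, t ≠ 0 →
        ‖∫ x in Set.Icc (0 : Fin n → ℝ) 1,
            Complex.exp (Complex.I * ((t * MvPolynomial.eval x f : ℝ) : ℂ))‖ ≤
          C * min (d : ℝ) (n : ℝ) * |t| ^ (-(1 / (d : ℝ))) := by
  refine ⟨8 * 10 ^ 9, by norm_num, fun n d hn hd f hf h0 h1 t ht => ?_⟩
  set Q := Set.Icc (0 : Fin n → ℝ) 1 with hQ
  have hQc : IsCompact Q := isCompact_Icc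
  -- The factor `2` gives the positive part of `F` mean `1`.
  set F := MvPolynomial.C 2 * f with hF
  have hFe : ∀ x, MvPolynomial.eval x F = 2 * MvPolynomial.eval x f := fun x => by
    rw [hF, map_mul, MvPolynomial.eval_C]
  have hFd : F.totalDegree ≤ d := by
    refine (MvPolynomial.totalDegree_mul _ _).trans ?_
    rw [MvPolynomial.totalDegree_C, zero_add]; exact hf
  have hfc : Continuous fun x : Fin n → ℝ => MvPolynomial.eval x f :=
    MvPolynomial.continuous_eval f
  have hFc : Continuous fun x : Fin n → ℝ => MvPolynomial.eval x F :=
    MvPolynomial.continuous_eval F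
  have iQ : ∀ {φ : (Fin n → ℝ) → ℝ}, Continuous φ → IntegrableOn φ Q := fun hφ =>
    hφ.continuousOn.integrableOn_compact hQc
  have hH1 : ∫ x in Q, MvPolynomial.eval x F = 0 := by
    simp only [hFe]; rw [integral_const_mul, h0, mul_zero]
  have hH2 : ∫ x in Q, (max (MvPolynomial.eval x F) 0 - 1) = 0 := by
    have e : ∀ x, max (MvPolynomial.eval x F) 0 - 1 =
        (|MvPolynomial.eval x f| + MvPolynomial.eval x f) - 1 := fun x => by
      rw [hFe]
      rcases le_total 0 (MvPolynomial.eval x f) with h | h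
      · rw [max_eq_left (by linarith), abs_of_nonneg h]; ring
      · rw [max_eq_right (by linarith), abs_of_nonpos h]; ring
    simp only [e]
    have hs : Continuous fun x : Fin n → ℝ =>
        |MvPolynomial.eval x f| + MvPolynomial.eval x f := hfc.abs.add hfc
    rw [integral_sub (iQ hs) (iQ continuous_const),
      integral_add (iQ hfc.abs) (iQ hfc), h0, h1, setIntegral_const, volume_real_cube]
    simp
  have hs : t / 2 ≠ 0 := div_ne_zero ht two_ne_zero
  have b1 := cube_bound hn hd hFd amplitude_one hH1 hs
  have b2 := cube_bound hn hd hFd amplitude_two hH2 hs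
  have hc1 := amplitude_one.continuous
  have hc2 := amplitude_two.continuous
  have iC : ∀ {φ : (Fin n → ℝ) → ℂ}, Continuous φ → IntegrableOn φ Q := fun hφ =>
    hφ.continuousOn.integrableOn_compact hQc
  have hec : Continuous fun x : Fin n → ℝ =>
      Complex.exp (Complex.I * ((t / 2 * MvPolynomial.eval x F : ℝ) : ℂ)) := by fun_prop
  have hsplit : ∫ x in Q, Complex.exp (Complex.I * ((t * MvPolynomial.eval x f : ℝ) : ℂ)) =
      (∫ x in Q, Complex.exp (Complex.I * ((t / 2 * MvPolynomial.eval x F : ℝ) : ℂ)) *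
        ((2 * MvPolynomial.eval x F / (1 + MvPolynomial.eval x F ^ 2) : ℝ) : ℂ)) +
      ∫ x in Q, Complex.exp (Complex.I * ((t / 2 * MvPolynomial.eval x F : ℝ) : ℂ)) *
        ((1 - 2 * MvPolynomial.eval x F / (1 + MvPolynomial.eval x F ^ 2) : ℝ) : ℂ) := by
    have k1 : Continuous fun x : Fin n → ℝ =>
        Complex.exp (Complex.I * ((t / 2 * MvPolynomial.eval x F : ℝ) : ℂ)) *
          ((2 * MvPolynomial.eval x F / (1 + MvPolynomial.eval x F ^ 2) : ℝ) : ℂ) :=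
      hec.mul (Complex.continuous_ofReal.comp (hc1.comp hFc))
    have k2 : Continuous fun x : Fin n → ℝ =>
        Complex.exp (Complex.I * ((t / 2 * MvPolynomial.eval x F : ℝ) : ℂ)) *
          ((1 - 2 * MvPolynomial.eval x F / (1 + MvPolynomial.eval x F ^ 2) : ℝ) : ℂ) :=
      hec.mul (Complex.continuous_ofReal.comp (hc2.comp hFc))
    rw [← integral_add (iC k1) (iC k2)]
    congr 1; ext x
    rw [← mul_add, ← Complex.ofReal_add, add_sub_cancel, Complex.ofReal_one, mul_one, hFe]
    congr 3; ring
  have hdR : (1 : ℝ) ≤ d := by exact_mod_cast hd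
  have hpow : |t / 2| ^ (-(1 / (d : ℝ))) ≤ 2 * |t| ^ (-(1 / (d : ℝ))) := by
    rw [abs_div, abs_two, Real.div_rpow (abs_nonneg t) two_pos.le, Real.rpow_neg two_pos.le,
      div_inv_eq_mul, mul_comm]
    gcongr
    calc (2 : ℝ) ^ (1 / (d : ℝ)) ≤ 2 ^ (1 : ℝ) := by
          apply Real.rpow_le_rpow_of_exponent_le one_le_two
          rw [div_le_one (by linarith)]; exact hdR
      _ = 2 := Real.rpow_one 2
  rw [hsplit]
  refine (norm_add_le _ _).trans ((add_le_add b1 b2).trans ?_)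
  have hD : 0 ≤ min (d : ℝ) (n : ℝ) := by positivity
  calc 2 * (10 ^ 9 * min (d : ℝ) n * |t / 2| ^ (-(1 / (d : ℝ)))) +
        2 * (10 ^ 9 * min (d : ℝ) n * |t / 2| ^ (-(1 / (d : ℝ)))) =
        4 * 10 ^ 9 * min (d : ℝ) n * |t / 2| ^ (-(1 / (d : ℝ))) := by ring
    _ ≤ 4 * 10 ^ 9 * min (d : ℝ) n * (2 * |t| ^ (-(1 / (d : ℝ)))) := by gcongr
    _ = _ := by ring
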